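/- arXiv:math/0603112 — 3 statements merged into one kernel-verified Lean document; each statement's English description precedes it below -/
import Mathlib

section
/- There exists a constant C > 0 such that for every x ≥ 1, |J₀(x) − √(2/π) · cos(x − π/4)/√x| ≤ C x^{−3/2}. -/
/-- The Bessel function of order zero, defined by its power series. -/
noncomputable def J0 (x : ℝ) : ℝ :=
  ∑' j : ℕ, ((-1 : ℝ) ^ j / ((Nat.factorial j : ℝ)) ^ 2) * (x / 2) ^ (2 * j)

open MeasureTheory Set Filter Topology

lemma wallis_aux (n : ℕ) : (∏ i ∈ Finset.range n, ((2 * (i:ℝ) + 1) / (2 * i + 2))) =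
    ((2*n).factorial : ℝ) / (4 ^ n * (n.factorial : ℝ) ^ 2) := by
  induction n with
  | zero => simp
  | succ k ih =>
    rw [Finset.prod_range_succ, ih, show 2 * (k+1) = (2*k+1)+1 by ring]
    simp only [Nat.factorial_succ]
    push_cast
    have : (k.factorial : ℝ) ≠ 0 := by positivity
    field_simp
    ring

lemma J0_int (x : ℝ) : ∫ θ in (0:ℝ)..Real.pi, Real.cos (x * Real.sin θ) = Real.pi * J0 x := by
  have key : HasSum (fun j : ℕ => ∫ θ in (0:ℝ)..Real.pi,
      (-1 : ℝ) ^ j * (x * Real.sin θ) ^ (2 * j) / ((2 * j).factorial : ℝ))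
      (∫ θ in (0:ℝ)..Real.pi, Real.cos (x * Real.sin θ)) := by
    refine intervalIntegral.hasSum_integral_of_dominated_convergence
      (fun j _ => |x| ^ (2*j) / ((2*j).factorial : ℝ)) ?_ ?_ ?_ ?_ ?_
    · intro n
      exact Continuous.aestronglyMeasurable (by fun_prop)
    · intro n
      refine Filter.Eventually.of_forall fun t _ => ?_
      rw [norm_div, norm_mul, norm_pow, norm_pow, norm_mul]
      simp only [norm_neg, norm_one, one_pow, one_mul, Real.norm_eq_abs, Nat.abs_cast]
      gcongr
      exact mul_le_of_le_one_right (abs_nonneg _) (Real.abs_sin_le_one t)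
    · refine Filter.Eventually.of_forall fun t _ => ?_
      exact (Real.hasSum_cosh |x|).summable
    · exact intervalIntegrable_const
    · exact Filter.Eventually.of_forall fun t _ => Real.hasSum_cos _
  rw [← key.tsum_eq, J0, ← tsum_mul_left]
  congr 1
  ext j
  have : (fun θ : ℝ => (-1 : ℝ) ^ j * (x * Real.sin θ) ^ (2 * j) / ((2 * j).factorial : ℝ)) =
    fun θ => ((-1 : ℝ) ^ j * x ^ (2*j) / ((2 * j).factorial : ℝ)) * Real.sin θ ^ (2 * j) := by
    ext θ; rw [mul_pow]; ring
  rw [this, intervalIntegral.integral_const_mul, integral_sin_pow_even, wallis_aux, div_pow,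
    pow_mul (2:ℝ)]
  have h1 : (j.factorial : ℝ) ≠ 0 := by positivity
  have h2 : ((2*j).factorial : ℝ) ≠ 0 := by positivity
  norm_num
  field_simp

lemma J0_int2 (x : ℝ) : Real.pi * J0 x =
    4 * ∫ u in (0:ℝ)..1, Real.cos (x * (1 - u^2)) / Real.sqrt (2 - u^2) := by
  rw [← J0_int]
  have e1 : ∫ θ in (0:ℝ)..Real.pi, Real.cos (x * Real.sin θ) =
      ∫ θ in (-(Real.pi/2))..(Real.pi/2), Real.cos (x * Real.cos θ) := by
    have := intervalIntegral.integral_comp_add_right (a := -(Real.pi/2)) (b := Real.pi/2)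
      (fun θ => Real.cos (x * Real.sin θ)) (Real.pi/2)
    simp only [Real.sin_add_pi_div_two] at this
    rw [this]; congr 1 <;> ring
  have e2 : ∫ θ in (-(Real.pi/2))..(Real.pi/2), Real.cos (x * Real.cos θ) =
      2 * ∫ θ in (0:ℝ)..(Real.pi/2), Real.cos (x * Real.cos θ) := by
    have hc : Continuous fun θ => Real.cos (x * Real.cos θ) := by fun_prop
    rw [← intervalIntegral.integral_add_adjacent_intervals (b := 0)
      (hc.intervalIntegrable _ _) (hc.intervalIntegrable _ _)]
    have := intervalIntegral.integral_comp_neg (a := 0) (b := Real.pi/2)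
      (fun θ => Real.cos (x * Real.cos θ))
    simp only [Real.cos_neg, neg_zero] at this
    rw [← this]; ring
  have e3 : ∫ θ in (0:ℝ)..(Real.pi/2), Real.cos (x * Real.cos θ) =
      2 * ∫ u in (0:ℝ)..1, Real.cos (x * (1 - u^2)) / Real.sqrt (2 - u^2) := by
    have h2 : (Real.sqrt 2)^2 = 2 := Real.sq_sqrt (by norm_num)
    have hpos : (0:ℝ) < Real.sqrt 2 := by positivity
    have hb : Real.sqrt 2 * Real.sin (Real.pi/2/2) = 1 := by
      rw [show Real.pi/2/2 = Real.pi/4 by ring, Real.sin_pi_div_four]; nlinarith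
    have ha : Real.sqrt 2 * Real.sin (0/2) = 0 := by simp
    have hle : (0:ℝ) ≤ Real.pi/2 := by positivity
    have := intervalIntegral.integral_comp_mul_deriv' (a := 0) (b := Real.pi/2)
      (f := fun θ => Real.sqrt 2 * Real.sin (θ/2)) (f' := fun θ => Real.sqrt 2 * (Real.cos (θ/2) * (1/2)))
      (g := fun u => Real.cos (x * (1 - u^2)) / Real.sqrt (2 - u^2)) ?_ ?_ ?_
    · rw [hb, ha] at this
      rw [← this, ← intervalIntegral.integral_const_mul]
      refine intervalIntegral.integral_congr fun θ hθ => ?_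
      rw [uIcc_of_le hle] at hθ
      have hcos : 0 < Real.cos (θ/2) := Real.cos_pos_of_mem_Ioo
        ⟨by linarith [hθ.1, Real.pi_pos], by linarith [hθ.2, Real.pi_pos]⟩
      have hs : Real.sqrt (2 - (Real.sqrt 2 * Real.sin (θ/2))^2) = Real.sqrt 2 * Real.cos (θ/2) := by
        rw [Real.sqrt_eq_iff_mul_self_eq_of_pos (by positivity)]
        nlinarith [Real.sin_sq_add_cos_sq (θ/2)]
      have hc : 1 - (Real.sqrt 2 * Real.sin (θ/2))^2 = Real.cos θ := by
        rw [mul_pow, h2, Real.sin_sq_eq_half_sub]; ring_nf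
      simp only [Function.comp]
      rw [hs, hc]
      field_simp
    · intro θ _
      exact (((hasDerivAt_id θ).div_const 2).sin).const_mul _
    · fun_prop
    · intro u hu
      obtain ⟨θ, hθ, rfl⟩ := hu
      rw [uIcc_of_le hle] at hθ
      have hcos : 0 < Real.cos (θ/2) := Real.cos_pos_of_mem_Ioo
        ⟨by linarith [hθ.1, Real.pi_pos], by linarith [hθ.2, Real.pi_pos]⟩
      have : Real.sqrt (2 - (Real.sqrt 2 * Real.sin (θ/2))^2) ≠ 0 := by
        refine (Real.sqrt_pos.2 ?_).ne'
        rw [mul_pow, h2]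
        nlinarith [Real.sin_sq_add_cos_sq (θ/2)]
      refine ContinuousAt.continuousWithinAt ?_
      exact ContinuousAt.div (by fun_prop) (by fun_prop) this
  rw [e1, e2, e3]; ring

lemma norm_cexp_le (b : ℂ) (hb : 0 ≤ b.re) (u : ℝ) : ‖Complex.exp (-b * (u:ℂ)^2)‖ ≤ 1 := by
  rw [Complex.norm_exp]
  have : (-b * (u:ℂ)^2).re = -(b.re * u^2) := by
    rw [← Complex.ofReal_pow, Complex.re_mul_ofReal]; simp
  rw [this, Real.exp_le_one_iff]
  have := mul_nonneg hb (sq_nonneg u)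
  linarith

lemma hasDeriv_cexp (b : ℂ) (u : ℝ) : HasDerivAt (fun u : ℝ => Complex.exp (-b * (u:ℂ)^2))
    (Complex.exp (-b * (u:ℂ)^2) * (-b * (2 * u))) u := by
  have h : HasDerivAt (fun u : ℝ => (u:ℂ)) 1 u := Complex.ofRealCLM.hasDerivAt
  have := ((h.pow 2).const_mul (-b)).cexp
  refine this.congr_deriv ?_
  simp

lemma hasDeriv_inv (u : ℝ) (hu : u ≠ 0) : HasDerivAt (fun u : ℝ => ((u:ℂ))⁻¹)
    (-((u:ℂ)^2)⁻¹) u := by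
  have h : HasDerivAt (fun u : ℝ => (u:ℂ)) 1 u := Complex.ofRealCLM.hasDerivAt
  refine (h.inv (by exact_mod_cast hu)).congr_deriv ?_
  rw [neg_div, one_div]

set_option maxHeartbeats 1000000 in
lemma tail_bound (b : ℂ) (hb : 0 < b.re) :
    ‖(∫ u : ℝ in Ioi 1, Complex.exp (-b * (u:ℂ)^2)) - Complex.exp (-b) / (2 * b)‖ ≤ 1 / ‖b‖^2 := by
  have hb0 : b ≠ 0 := by rintro rfl; simp at hb
  have hn : 0 < ‖b‖ := norm_pos_iff.2 hb0
  set k : ℝ → ℂ := fun u => Complex.exp (-b * (u:ℂ)^2) * (3 / (4 * b^2) * ((u:ℂ)^4)⁻¹) with hk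
  have hkb : ∀ u ∈ Ioi (1:ℝ), ‖k u‖ ≤ 3 / (4 * ‖b‖^2) * u ^ (-4 : ℝ) := by
    intro u hu
    have hu0 : (0:ℝ) < u := lt_trans one_pos hu
    have h4 : u ^ (-4:ℝ) = (u^4)⁻¹ := by
      rw [Real.rpow_neg hu0.le]; norm_cast
    rw [h4, hk]
    simp only [norm_mul, norm_div, norm_inv, norm_pow, Complex.norm_real, Real.norm_eq_abs, abs_of_pos hu0]
    have := norm_cexp_le b hb.le u
    simp only [Complex.norm_ofNat]
    exact mul_le_of_le_one_left (by positivity) this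
  have hrint : IntegrableOn (fun u : ℝ => 3 / (4 * ‖b‖^2) * u ^ (-4 : ℝ)) (Ioi 1) :=
    (integrableOn_Ioi_rpow_of_lt (by norm_num) one_pos).const_mul _
  have hkint : IntegrableOn k (Ioi 1) := by
    refine Integrable.mono' hrint ?_ ?_
    · refine ContinuousOn.aestronglyMeasurable ?_ measurableSet_Ioi
      intro u hu
      have hu0 : (u:ℂ)^4 ≠ 0 := by
        have : u ≠ 0 := (lt_trans one_pos hu).ne'
        exact_mod_cast pow_ne_zero 4 this
      refine ContinuousAt.continuousWithinAt ?_
      have : ContinuousAt (fun u:ℝ => ((u:ℂ)^4)⁻¹) u := ContinuousAt.inv₀ (by fun_prop) hu0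
      rw [hk]
      exact ContinuousAt.mul (by fun_prop) (this.const_mul _)
    · exact (ae_restrict_iff' measurableSet_Ioi).2 (Eventually.of_forall hkb)
  have hgint : IntegrableOn (fun u : ℝ => Complex.exp (-b * (u:ℂ)^2)) (Ioi 1) :=
    (integrable_cexp_neg_mul_sq hb).integrableOn
  set G : ℝ → ℂ := fun u => Complex.exp (-b * (u:ℂ)^2) * (-(1/(2*b)) * (u:ℂ)⁻¹ + 1/(4*b^2) * ((u:ℂ)⁻¹)^3) with hG
  have hder : ∀ u ∈ Ici (1:ℝ), HasDerivAt G (Complex.exp (-b * (u:ℂ)^2) - k u) u := by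
    intro u hu
    have hu0 : u ≠ 0 := (lt_of_lt_of_le one_pos hu).ne'
    have huc : (u:ℂ) ≠ 0 := by exact_mod_cast hu0
    have hi := hasDeriv_inv u hu0
    have := (hasDeriv_cexp b u).mul ((hi.const_mul (-(1/(2*b)))).add ((hi.pow 3).const_mul (1/(4*b^2))))
    refine this.congr_deriv ?_
    rw [hk]
    simp
    field_simp
    ring
  have hlim : Tendsto G atTop (𝓝 0) := by
    have hinv : Tendsto (fun u : ℝ => ((u:ℂ))⁻¹) atTop (𝓝 0) := by
      have := (Complex.continuous_ofReal.tendsto 0).comp tendsto_inv_atTop_zero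
      simpa [Function.comp_def] using this
    have h2 : Tendsto (fun u : ℝ => (-(1/(2*b)) * (u:ℂ)⁻¹ + 1/(4*b^2) * ((u:ℂ)⁻¹)^3)) atTop (𝓝 0) := by
      have h3 := (hinv.const_mul (-(1/(2*b)))).add ((hinv.pow 3).const_mul (1/(4*b^2)))
      rw [show -(1/(2*b)) * 0 + 1/(4*b^2) * 0^3 = (0:ℂ) by ring] at h3
      exact h3
    have h4 := h2.norm
    rw [norm_zero] at h4
    refine squeeze_zero_norm (fun u => ?_) h4
    rw [hG]
    simp only [norm_mul]
    exact mul_le_of_le_one_left (norm_nonneg _) (norm_cexp_le b hb.le u)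
  have hI := integral_Ioi_of_hasDerivAt_of_tendsto' hder (hgint.sub hkint) hlim
  have hs : ∫ u in Ioi (1:ℝ), (Complex.exp (-b * (u:ℂ)^2) - k u) =
    (∫ u in Ioi (1:ℝ), Complex.exp (-b * (u:ℂ)^2)) - ∫ u in Ioi (1:ℝ), k u := integral_sub hgint hkint
  rw [hs] at hI
  have hkn : ‖∫ u in Ioi (1:ℝ), k u‖ ≤ 1 / (4 * ‖b‖^2) := by
    refine (norm_integral_le_of_norm_le hrint
      ((ae_restrict_iff' measurableSet_Ioi).2 (Eventually.of_forall hkb))).trans ?_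
    rw [integral_const_mul, integral_Ioi_rpow_of_lt (by norm_num) one_pos]
    apply le_of_eq
    norm_num
  have e : (∫ u : ℝ in Ioi 1, Complex.exp (-b * (u:ℂ)^2)) - Complex.exp (-b) / (2 * b) =
      (∫ u in Ioi (1:ℝ), k u) - Complex.exp (-b * ((1:ℝ):ℂ)^2) * (1 / (4*b^2)) := by
    have : (∫ u : ℝ in Ioi 1, Complex.exp (-b * (u:ℂ)^2)) = (∫ u in Ioi (1:ℝ), k u) + (0 - G 1) := by
      rw [← hI]; ring
    rw [this, hG]
    simp
    ring
  rw [e]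
  refine (norm_sub_le _ _).trans ?_
  have h2 : ‖Complex.exp (-b * ((1:ℝ):ℂ)^2) * (1 / (4*b^2))‖ ≤ 1 / (4 * ‖b‖^2) := by
    rw [norm_mul]
    have : ‖1 / (4*b^2)‖ = 1 / (4 * ‖b‖^2) := by simp
    rw [this]
    exact mul_le_of_le_one_left (by positivity) (norm_cexp_le b hb.le 1)
  have : 1 / (4 * ‖b‖^2) + 1 / (4 * ‖b‖^2) ≤ 1 / ‖b‖^2 := by
    rw [show 1 / (4 * ‖b‖^2) = (1/4) * (1 / ‖b‖^2) by field_simp]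
    have : 0 ≤ 1 / ‖b‖^2 := by positivity
    linarith
  linarith

lemma fresnel_re_pos (b : ℂ) (hb : 0 < b.re) :
    ‖(∫ u in (0:ℝ)..1, Complex.exp (-b * (u:ℂ)^2)) - (Real.pi / b) ^ (1/2 : ℂ) / 2
      + Complex.exp (-b) / (2 * b)‖ ≤ 1 / ‖b‖^2 := by
  have hi := (integrable_cexp_neg_mul_sq hb)
  have := intervalIntegral.integral_interval_add_Ioi (a := 0) (b := 1)
    hi.integrableOn hi.integrableOn
  rw [integral_gaussian_complex_Ioi hb] at this
  rw [← this, ← norm_neg]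
  refine le_trans (le_of_eq (congrArg norm ?_)) (tail_bound b hb)
  ring

lemma fresnel_im (x : ℝ) (hx : 0 < x) :
    ‖(∫ u in (0:ℝ)..1, Complex.exp (-(x * Complex.I) * (u:ℂ)^2)) - (Real.pi / (x * Complex.I)) ^ (1/2 : ℂ) / 2
      + Complex.exp (-(x * Complex.I)) / (2 * (x * Complex.I))‖ ≤ 1 / x^2 := by
  set b : ℝ → ℂ := fun e => e + x * Complex.I with hb
  have hbre : ∀ e, (b e).re = e := by intro e; simp [hb]
  have hbim : ∀ e, (b e).im = x := by intro e; simp [hb]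
  have hb0 : b 0 = x * Complex.I := by simp [hb]
  have hne : b 0 ≠ 0 := by
    intro h; have := hbim 0; rw [h] at this; simp at this; linarith
  have hbc : Continuous b := by rw [hb]; fun_prop
  have c1 : Continuous fun e => ∫ u in (0:ℝ)..1, Complex.exp (-(b e) * (u:ℂ)^2) := by
    apply intervalIntegral.continuous_parametric_intervalIntegral_of_continuous'
    simp only [Function.uncurry_def]
    fun_prop
  have c2 : ContinuousAt (fun e => (Real.pi / b e : ℂ) ^ (1/2 : ℂ)) 0 := by
    refine ContinuousAt.cpow (ContinuousAt.div (by fun_prop) (by fun_prop) hne) continuousAt_const ?_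
    right
    rw [hb0]
    have : (Real.pi / (x * Complex.I) : ℂ) = ((-(Real.pi / x) : ℝ) : ℂ) * Complex.I := by
      have : (x:ℂ) ≠ 0 := by exact_mod_cast hx.ne'
      push_cast
      field_simp
      simp
    rw [this]
    simp [hx.ne', Real.pi_ne_zero]
  have c3 : ContinuousAt (fun e => Complex.exp (-(b e)) / (2 * b e)) 0 :=
    ContinuousAt.div (by fun_prop) (by fun_prop) (by simpa using hne)
  have c4 : ContinuousAt (fun e => 1 / ‖b e‖^2) 0 :=
    ContinuousAt.div (by fun_prop) (by fun_prop) (by simpa using hne)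
  have := ((c1.continuousAt.sub (c2.div_const 2)).add c3).norm
  have key := le_of_tendsto_of_tendsto (this.tendsto.mono_left nhdsWithin_le_nhds)
    (c4.tendsto.mono_left nhdsWithin_le_nhds) (b := 𝓝[>] 0) (by
      filter_upwards [self_mem_nhdsWithin] with e he
      exact fresnel_re_pos (b e) (by rw [hbre]; exact he))
  simpa [hb0, abs_of_pos hx] using key

lemma vdc (x : ℝ) (hx : 0 < x) (v : ℝ) (hv : 0 ≤ v) :
    ‖∫ u in (0:ℝ)..v, Complex.exp (-(x * Complex.I) * (u:ℂ)^2)‖ ≤ 2 / Real.sqrt x := by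
  set b : ℂ := x * Complex.I with hb
  have hbre : 0 ≤ b.re := by simp [hb]
  have hbn : ‖b‖ = x := by simp [hb, abs_of_pos hx]
  have hb0 : b ≠ 0 := by rw [← norm_pos_iff, hbn]; exact hx
  set a := 1 / Real.sqrt x with ha
  have hsx : 0 < Real.sqrt x := Real.sqrt_pos.2 hx
  have ha0 : 0 < a := by positivity
  have hc : Continuous fun u : ℝ => Complex.exp (-b * (u:ℂ)^2) := by fun_prop
  have triv : ∀ c, 0 ≤ c → ‖∫ u in (0:ℝ)..c, Complex.exp (-b * (u:ℂ)^2)‖ ≤ c := by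
    intro c hc
    have := intervalIntegral.norm_integral_le_of_norm_le_const (a := 0) (b := c) (C := 1)
      (f := fun u : ℝ => Complex.exp (-b * (u:ℂ)^2)) (fun u _ => norm_cexp_le b hbre u)
    simpa [abs_of_nonneg hc] using this
  have e2 : 2 / Real.sqrt x = a + a := by rw [ha]; ring
  rw [e2]
  rcases le_total v a with h | h
  · linarith [triv v hv]
  rw [← intervalIntegral.integral_add_adjacent_intervals (b := a)
      (hc.intervalIntegrable _ _) (hc.intervalIntegrable _ _)]
  refine (norm_add_le _ _).trans (add_le_add (triv a ha0.le) ?_)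
  have hpos : ∀ u ∈ uIcc a v, 0 < u := by
    intro u hu; rw [uIcc_of_le h] at hu; exact ha0.trans_le hu.1
  have hci : ContinuousOn (fun u : ℝ => ((u:ℂ)^2)⁻¹) (uIcc a v) := by
    intro u hu
    have := (hpos u hu).ne'
    exact (ContinuousAt.inv₀ (by fun_prop) (by exact_mod_cast pow_ne_zero 2 this)).continuousWithinAt
  have hcr : ContinuousOn (fun u : ℝ => (u^2)⁻¹) (uIcc a v) := by
    intro u hu
    have := (hpos u hu).ne'
    exact (ContinuousAt.inv₀ (f := fun u : ℝ => u^2) (by fun_prop) (pow_ne_zero 2 this)).continuousWithinAt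
  set k : ℝ → ℂ := fun u => Complex.exp (-b * (u:ℂ)^2) * (1 / (2*b) * ((u:ℂ)^2)⁻¹) with hk
  have hkc : ContinuousOn k (uIcc a v) := hc.continuousOn.mul (continuousOn_const.mul hci)
  have hI := intervalIntegral.integral_eq_sub_of_hasDerivAt (a := a) (b := v)
    (f := fun u : ℝ => Complex.exp (-b * (u:ℂ)^2) * (-(1/(2*b)) * (u:ℂ)⁻¹))
    (f' := fun u : ℝ => Complex.exp (-b * (u:ℂ)^2) + k u) (by
      intro u hu
      have hu0 := (hpos u hu).ne'
      have huc : (u:ℂ) ≠ 0 := by exact_mod_cast hu0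
      refine ((hasDeriv_cexp b u).mul ((hasDeriv_inv u hu0).const_mul (-(1/(2*b))))).congr_deriv ?_
      rw [hk]
      simp
      field_simp) ((hc.continuousOn.add hkc).intervalIntegrable)
  rw [intervalIntegral.integral_add (hc.intervalIntegrable _ _) hkc.intervalIntegrable] at hI
  rw [eq_sub_of_add_eq hI]
  have hkn : ‖∫ u in a..v, k u‖ ≤ 1/(2*x) * (a⁻¹ - v⁻¹) := by
    have h1 : ‖∫ u in a..v, k u‖ ≤ ∫ u in a..v, 1/(2*x) * (u^2)⁻¹ := by
      refine intervalIntegral.norm_integral_le_of_norm_le h (Eventually.of_forall fun u hu => ?_)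
        (continuousOn_const.mul hcr).intervalIntegrable
      have hu0 : 0 < u := ha0.trans hu.1
      rw [hk]
      simp only [norm_mul, norm_div, norm_inv, norm_pow, Complex.norm_real, Real.norm_eq_abs, abs_of_pos hu0,
        hbn, Complex.norm_ofNat, norm_one]
      exact mul_le_of_le_one_left (by positivity) (norm_cexp_le b hbre u)
    refine h1.trans (le_of_eq ?_)
    rw [intervalIntegral.integral_const_mul]
    congr 1
    rw [intervalIntegral.integral_eq_sub_of_hasDerivAt (f := fun u => -u⁻¹) (f' := fun u : ℝ => (u^2)⁻¹) ?_
      hcr.intervalIntegrable]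
    · ring
    · intro u hu
      exact (hasDerivAt_inv (hpos u hu).ne').neg.congr_deriv (by simp)
  have hbd : ∀ u : ℝ, 0 < u → ‖Complex.exp (-b * (u:ℂ)^2) * (-(1/(2*b)) * (u:ℂ)⁻¹)‖ ≤ 1/(2*x) * u⁻¹ := by
    intro u hu
    simp only [norm_mul, norm_div, norm_inv, norm_neg, Complex.norm_real, Real.norm_eq_abs, abs_of_pos hu,
        hbn, Complex.norm_ofNat, norm_one]
    exact mul_le_of_le_one_left (by positivity) (norm_cexp_le b hbre u)
  have hfin : 1/(2*x) * v⁻¹ + 1/(2*x)*a⁻¹ + 1/(2*x) * (a⁻¹ - v⁻¹) = a := by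
    have : x = Real.sqrt x ^ 2 := (Real.sq_sqrt hx.le).symm
    have hai : a⁻¹ = Real.sqrt x := by rw [ha]; simp
    have : 1/(2*x) * v⁻¹ + 1/(2*x)*a⁻¹ + 1/(2*x) * (a⁻¹ - v⁻¹) = a⁻¹ / x := by field_simp; ring
    rw [this, hai, ha]
    rw [div_eq_div_iff hx.ne' hsx.ne']
    nlinarith [Real.mul_self_sqrt hx.le]
  refine le_trans ?_ hfin.le
  refine (norm_sub_le _ _).trans (add_le_add ((norm_sub_le _ _).trans (add_le_add (hbd v (ha0.trans_le h)) (hbd a ha0))) hkn)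

set_option maxHeartbeats 1000000 in
lemma osc (w w' w'' : ℝ → ℂ) (h1 : ∀ u ∈ Icc (0:ℝ) 1, HasDerivAt w (w' u) u)
    (h2 : ∀ u ∈ Icc (0:ℝ) 1, HasDerivAt w' (w'' u) u) (h3 : ContinuousOn w'' (Icc 0 1))
    (hw0 : w 0 = 0) : ∃ C : ℝ, 0 ≤ C ∧ ∀ x : ℝ, 0 < x →
    ‖(∫ u in (0:ℝ)..1, w u * (Complex.exp (-(x * Complex.I) * (u:ℂ)^2) * u))
      + Complex.exp (-(x * Complex.I)) * w 1 / (2 * (x * Complex.I))‖ ≤ C / (x * Real.sqrt x) := by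
  obtain ⟨M, hM⟩ := isCompact_Icc.exists_bound_of_continuousOn h3
  have hM0 : 0 ≤ M := (norm_nonneg _).trans (hM 0 (by simp))
  refine ⟨‖w' 1‖ + M, by positivity, fun x hx => ?_⟩
  set b : ℂ := x * Complex.I with hb
  have hbre : 0 ≤ b.re := by simp [hb]
  have hbn : ‖b‖ = x := by simp [hb, abs_of_pos hx]
  have hb0 : b ≠ 0 := by rw [← norm_pos_iff, hbn]; exact hx
  have hsx : 0 < Real.sqrt x := Real.sqrt_pos.2 hx
  have hu : uIcc (0:ℝ) 1 = Icc 0 1 := uIcc_of_le zero_le_one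
  have hw'c : ContinuousOn w' (uIcc 0 1) := by
    rw [hu]; exact fun u hu => (h2 u hu).continuousAt.continuousWithinAt
  have hc : Continuous fun u : ℝ => Complex.exp (-b * (u:ℂ)^2) := by fun_prop
  have p1 := intervalIntegral.integral_mul_deriv_eq_deriv_mul (a := 0) (b := 1) (u := w) (u' := w')
    (v := fun u : ℝ => Complex.exp (-b * (u:ℂ)^2) * (-(1/(2*b))))
    (v' := fun u : ℝ => Complex.exp (-b * (u:ℂ)^2) * u) (by rwa [hu])
    (fun u _ => ((hasDeriv_cexp b u).mul_const _).congr_deriv (by field_simp))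
    hw'c.intervalIntegrable (Continuous.intervalIntegrable (by fun_prop) _ _)
  set E : ℝ → ℂ := fun v => ∫ u in (0:ℝ)..v, Complex.exp (-b * (u:ℂ)^2) with hE
  have hEd : ∀ v : ℝ, HasDerivAt E (Complex.exp (-b * (v:ℂ)^2)) v := fun v =>
    intervalIntegral.integral_hasDerivAt_right (hc.intervalIntegrable _ _)
      (hc.stronglyMeasurableAtFilter _ _) hc.continuousAt
  have hEb : ∀ v : ℝ, 0 ≤ v → ‖E v‖ ≤ 2 / Real.sqrt x := fun v hv => vdc x hx v hv
  have hE0 : E 0 = 0 := by simp [hE]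
  have p2 := intervalIntegral.integral_mul_deriv_eq_deriv_mul (a := 0) (b := 1) (u := w') (u' := w'')
    (v := E) (v' := fun u : ℝ => Complex.exp (-b * (u:ℂ)^2)) (by rwa [hu])
    (fun u _ => hEd u) (by apply ContinuousOn.intervalIntegrable; rwa [hu]) (hc.intervalIntegrable _ _)
  have hI : ‖∫ u in (0:ℝ)..1, w'' u * E u‖ ≤ M * (2 / Real.sqrt x) := by
    have := intervalIntegral.norm_integral_le_of_norm_le_const (a := 0) (b := 1) (C := M * (2 / Real.sqrt x))
      (f := fun u => w'' u * E u) (fun u hu => by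
        rw [uIoc_of_le zero_le_one] at hu
        rw [norm_mul]
        exact mul_le_mul (hM u ⟨hu.1.le, hu.2⟩) (hEb u hu.1.le) (norm_nonneg _) hM0)
    simpa using this
  have hJ : ‖∫ u in (0:ℝ)..1, w' u * Complex.exp (-b * (u:ℂ)^2)‖ ≤ (‖w' 1‖ + M) * (2 / Real.sqrt x) := by
    rw [p2, hE0, mul_zero, sub_zero, add_mul]
    refine (norm_sub_le _ _).trans (add_le_add ?_ hI)
    rw [norm_mul]
    exact mul_le_mul_of_nonneg_left (hEb 1 zero_le_one) (norm_nonneg _)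
  have e : (∫ u in (0:ℝ)..1, w u * (Complex.exp (-b * (u:ℂ)^2) * u)) + Complex.exp (-b) * w 1 / (2 * b)
      = (1/(2*b)) * ∫ u in (0:ℝ)..1, w' u * Complex.exp (-b * (u:ℂ)^2) := by
    have : ∫ u in (0:ℝ)..1, w' u * (Complex.exp (-b * (u:ℂ)^2) * (-(1/(2*b)))) =
        (-(1/(2*b))) * ∫ u in (0:ℝ)..1, w' u * Complex.exp (-b * (u:ℂ)^2) := by
      rw [← intervalIntegral.integral_const_mul]
      congr 1; ext u; ring
    rw [p1, this, hw0]
    simp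
    ring
  rw [e, norm_mul]
  have hn : ‖1/(2*b)‖ = 1/(2*x) := by simp [hbn]
  rw [hn]
  refine (mul_le_mul_of_nonneg_left hJ (by positivity)).trans (le_of_eq ?_)
  field_simp

lemma sqrt_pi_div (x : ℝ) (hx : 0 < x) : (Real.pi / (x * Complex.I) : ℂ) ^ (1/2 : ℂ) =
    Real.sqrt (Real.pi / x) * Complex.exp (((-(Real.pi/4) : ℝ) : ℂ) * Complex.I) := by
  have hp : 0 < Real.sqrt (Real.pi / x) := Real.sqrt_pos.2 (by positivity)
  have hsq : (Real.sqrt (Real.pi / x) * Complex.exp (((-(Real.pi/4) : ℝ) : ℂ) * Complex.I))^2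
      = (Real.pi / (x * Complex.I) : ℂ) := by
    rw [mul_pow, ← Complex.ofReal_pow, Real.sq_sqrt (by positivity), ← Complex.exp_nat_mul]
    have : ((2:ℕ):ℂ) * (((-(Real.pi/4) : ℝ) : ℂ) * Complex.I) = -(Real.pi / 2 * Complex.I) := by
      push_cast; ring
    rw [this, Complex.exp_neg, Complex.exp_pi_div_two_mul_I]
    push_cast
    field_simp
  rw [← hsq, one_div]
  apply Complex.sq_cpow_two_inv
  rw [Complex.re_ofReal_mul, Complex.exp_ofReal_mul_I_re, Real.cos_neg, Real.cos_pi_div_four]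
  positivity

noncomputable def wfun (u : ℝ) : ℂ :=
  ((u / (Real.sqrt 2 * Real.sqrt (2 - u^2) * (Real.sqrt 2 + Real.sqrt (2 - u^2))) : ℝ) : ℂ)

lemma wfun_contDiff : ContDiffOn ℝ 2 wfun (Ioo (-(5/4)) (5/4)) := by
  have h2 : ContDiffOn ℝ 2 (fun u : ℝ => Real.sqrt (2 - u^2)) (Ioo (-(5/4)) (5/4)) := by
    refine ContDiffOn.sqrt (by fun_prop) fun u hu => ?_
    nlinarith [hu.1, hu.2]
  refine Complex.ofRealCLM.contDiff.comp_contDiffOn (ContDiffOn.div (by fun_prop)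
    ((contDiffOn_const.mul h2).mul (contDiffOn_const.add h2)) fun u hu => ?_)
  have : 0 < Real.sqrt (2 - u^2) := Real.sqrt_pos.2 (by nlinarith [hu.1, hu.2])
  positivity

lemma wfun_osc : ∃ C : ℝ, 0 ≤ C ∧ ∀ x : ℝ, 0 < x →
    ‖(∫ u in (0:ℝ)..1, wfun u * (Complex.exp (-(x * Complex.I) * (u:ℂ)^2) * u))
      + Complex.exp (-(x * Complex.I)) * wfun 1 / (2 * (x * Complex.I))‖ ≤ C / (x * Real.sqrt x) := by
  have hs : Icc (0:ℝ) 1 ⊆ Ioo (-(5/4)) (5/4) := fun u hu => ⟨by linarith [hu.1], by linarith [hu.2]⟩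
  have hc := wfun_contDiff
  have hc1 : ContDiffOn ℝ 1 (deriv wfun) (Ioo (-(5/4)) (5/4)) :=
    hc.deriv_of_isOpen isOpen_Ioo (by norm_num)
  have hc2 : ContDiffOn ℝ 0 (deriv (deriv wfun)) (Ioo (-(5/4)) (5/4)) :=
    hc1.deriv_of_isOpen isOpen_Ioo (by norm_num)
  refine osc wfun (deriv wfun) (deriv (deriv wfun)) ?_ ?_ (hc2.continuousOn.mono hs) (by simp [wfun])
  · intro u hu
    exact ((hc.differentiableOn (by norm_num)).differentiableAt (isOpen_Ioo.mem_nhds (hs hu))).hasDerivAt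
  · intro u hu
    exact ((hc1.differentiableOn (by norm_num)).differentiableAt (isOpen_Ioo.mem_nhds (hs hu))).hasDerivAt

lemma wfun_eq (u : ℝ) (hu : u ∈ Icc (0:ℝ) 1) : ((1 / Real.sqrt (2 - u^2) : ℝ) : ℂ) =
    ((1 / Real.sqrt 2 : ℝ) : ℂ) + wfun u * u := by
  rw [wfun, ← Complex.ofReal_mul, ← Complex.ofReal_add]
  congr 1
  have hp : 0 < 2 - u^2 := by nlinarith [hu.1, hu.2]
  have h1 : 0 < Real.sqrt (2 - u^2) := Real.sqrt_pos.2 hp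
  have h2 : 0 < Real.sqrt 2 := by positivity
  have h3 := Real.sq_sqrt hp.le
  have h4 := Real.sq_sqrt (show (0:ℝ) ≤ 2 by norm_num)
  field_simp
  nlinarith

lemma J0_cint (x : ℝ) : Real.pi * J0 x =
    4 * (Complex.exp (x * Complex.I) * ∫ u in (0:ℝ)..1,
      Complex.exp (-(x * Complex.I) * (u:ℂ)^2) * ((1 / Real.sqrt (2 - u^2) : ℝ) : ℂ)).re := by
  rw [J0_int2, ← intervalIntegral.integral_const_mul (Complex.exp (x * Complex.I))]
  have hcont : ContinuousOn (fun u : ℝ => Complex.exp (x * Complex.I) * (Complex.exp (-(x * Complex.I) * (u:ℂ)^2) *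
      ((1 / Real.sqrt (2 - u^2) : ℝ) : ℂ))) (uIcc 0 1) := by
    rw [uIcc_of_le zero_le_one]
    refine continuousOn_const.mul (ContinuousOn.mul (by fun_prop) ?_)
    refine Complex.continuous_ofReal.comp_continuousOn ?_
    refine ContinuousOn.div (by fun_prop) (by fun_prop) fun u hu => ?_
    exact (Real.sqrt_pos.2 (by nlinarith [hu.1, hu.2])).ne'
  have := Complex.reCLM.intervalIntegral_comp_comm (μ := volume) hcont.intervalIntegrable
  simp only [Complex.reCLM_apply] at this
  rw [← this]
  congr 1
  refine intervalIntegral.integral_congr fun u _ => ?_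
  rw [← mul_assoc, ← Complex.exp_add, Complex.re_mul_ofReal,
    show (x * Complex.I + -(x * Complex.I) * (u:ℂ)^2) = ((x * (1 - u^2) : ℝ) : ℂ) * Complex.I by push_cast; ring,
    Complex.exp_ofReal_mul_I_re]
  ring

theorem J0_asymptotics :
    ∃ C : ℝ, 0 < C ∧ ∀ x : ℝ, 1 ≤ x →
      |J0 x - Real.sqrt (2 / Real.pi) * Real.cos (x - Real.pi / 4) / Real.sqrt x| ≤
        C * x ^ (-(3 : ℝ) / 2) := by
  obtain ⟨C, hC0, hC⟩ := wfun_osc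
  refine ⟨4 / Real.pi * (1 + C), by positivity, fun x hx1 => ?_⟩
  have hx : 0 < x := by linarith
  have hsx : 0 < Real.sqrt x := Real.sqrt_pos.2 hx
  have hpw : x ^ (-(3:ℝ)/2) = 1 / (x * Real.sqrt x) := by
    rw [show (-(3:ℝ)/2) = -(1 + 1/2) by norm_num, Real.rpow_neg hx.le, Real.rpow_add hx, Real.rpow_one,
      ← Real.sqrt_eq_rpow, one_div]
  have hF := fresnel_im x hx
  have hW := hC x hx
  have hJ := J0_cint x
  rw [sqrt_pi_div x hx] at hF
  set b : ℂ := x * Complex.I with hb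
  have hbn : ‖b‖ = x := by simp [hb, abs_of_pos hx]
  have hb0 : b ≠ 0 := by rw [← norm_pos_iff, hbn]; exact hx
  set F := ∫ u in (0:ℝ)..1, Complex.exp (-b * (u:ℂ)^2) with hFdef
  set W := ∫ u in (0:ℝ)..1, wfun u * (Complex.exp (-b * (u:ℂ)^2) * u) with hWdef
  have hwc : ContinuousOn wfun (uIcc 0 1) := wfun_contDiff.continuousOn.mono (by
    rw [uIcc_of_le zero_le_one]
    exact fun u hu => ⟨by linarith [hu.1], by linarith [hu.2]⟩)
  have hS : ∫ u in (0:ℝ)..1, Complex.exp (-b * (u:ℂ)^2) * ((1 / Real.sqrt (2 - u^2) : ℝ) : ℂ)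
      = ((1 / Real.sqrt 2 : ℝ) : ℂ) * F + W := by
    rw [hFdef, hWdef, ← intervalIntegral.integral_const_mul, ← intervalIntegral.integral_add]
    · refine intervalIntegral.integral_congr fun u hu => ?_
      rw [uIcc_of_le zero_le_one] at hu
      rw [wfun_eq u hu]
      ring
    · exact Continuous.intervalIntegrable (by fun_prop) _ _
    · exact (hwc.mul (by fun_prop)).intervalIntegrable
  rw [hS] at hJ
  set P : ℂ := Real.sqrt (Real.pi / x) * Complex.exp (((-(Real.pi/4) : ℝ) : ℂ) * Complex.I) with hP
  set D1 := F - P / 2 + Complex.exp (-b) / (2*b) with hD1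
  set D2 := W + Complex.exp (-b) * wfun 1 / (2*b) with hD2
  set s : ℝ := 1 / Real.sqrt 2 with hs
  have hs0 : 0 < s := by positivity
  have hs1 : s ≤ 1 := by
    rw [hs, div_le_one (by positivity)]
    exact Real.one_le_sqrt.2 (by norm_num)
  have hee : Complex.exp b * Complex.exp (-b) = 1 := by rw [← Complex.exp_add]; simp
  have hdec : Complex.exp b * ((s:ℂ) * F + W) = s / 2 * (Complex.exp b * P)
      + Complex.exp b * (s * D1 + D2) - (s + wfun 1) / (2 * b) := by
    rw [hD1, hD2]
    linear_combination (-(s + wfun 1) / (2*b)) * hee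
  have hre0 : ((s + wfun 1) / (2 * b)).re = 0 := by
    rw [wfun, hb, ← Complex.ofReal_add]
    simp [Complex.div_re]
  have hreP : ((s:ℂ) / 2 * (Complex.exp b * P)).re =
      s / 2 * (Real.sqrt (Real.pi / x) * Real.cos (x - Real.pi/4)) := by
    have : (s:ℂ) / 2 * (Complex.exp b * P) = ((s / 2 * Real.sqrt (Real.pi / x) : ℝ) : ℂ) *
        Complex.exp (((x - Real.pi/4 : ℝ) : ℂ) * Complex.I) := by
      rw [show ((x - Real.pi/4 : ℝ) : ℂ) * Complex.I = b + ((-(Real.pi/4) : ℝ) : ℂ) * Complex.I by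
        rw [hb]; push_cast; ring, Complex.exp_add, hP]
      push_cast; ring
    rw [this, Complex.re_ofReal_mul, Complex.exp_ofReal_mul_I_re]; ring
  rw [hdec, Complex.sub_re, Complex.add_re, hre0, hreP, sub_zero] at hJ
  have hmain : 4 / Real.pi * (s / 2 * (Real.sqrt (Real.pi / x) * Real.cos (x - Real.pi/4))) =
      Real.sqrt (2 / Real.pi) * Real.cos (x - Real.pi / 4) / Real.sqrt x := by
    rw [hs, Real.sqrt_div Real.pi_pos.le, Real.sqrt_div (by norm_num : (0:ℝ) ≤ 2)]
    have h2 : Real.sqrt 2 ^ 2 = 2 := Real.sq_sqrt (by norm_num)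
    have hp2 : Real.sqrt Real.pi ^ 2 = Real.pi := Real.sq_sqrt Real.pi_pos.le
    have hpp : 0 < Real.sqrt Real.pi := Real.sqrt_pos.2 Real.pi_pos
    rw [← hp2, Real.sqrt_sq hpp.le]
    field_simp
    rw [h2]; ring
  have hfin : J0 x - Real.sqrt (2 / Real.pi) * Real.cos (x - Real.pi / 4) / Real.sqrt x =
      4 / Real.pi * (Complex.exp b * (s * D1 + D2)).re := by
    rw [← hmain]
    have : J0 x = (Real.pi * J0 x) / Real.pi := by field_simp
    rw [this, hJ]
    ring
  have hbnd : |(Complex.exp b * (s * D1 + D2)).re| ≤ (1 + C) / (x * Real.sqrt x) := by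
    refine (Complex.abs_re_le_norm _).trans ?_
    rw [norm_mul, hb, Complex.norm_exp_ofReal_mul_I, one_mul]
    refine (norm_add_le _ _).trans ?_
    rw [add_div]
    refine add_le_add ?_ hW
    rw [norm_mul, Complex.norm_real, Real.norm_of_nonneg hs0.le]
    refine (mul_le_of_le_one_left (norm_nonneg _) hs1).trans (hF.trans ?_)
    rw [sq]
    have : Real.sqrt x ≤ x := by rw [Real.sqrt_le_left hx.le]; nlinarith
    gcongr
  rw [hfin, abs_mul, abs_of_pos (by positivity), hpw, mul_assoc, mul_one_div]
  exact mul_le_mul_of_nonneg_left hbnd (by positivity)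
end

section
/- There exists a constant C > 0 such that for every x ≥ 1, |J₀′(x) + √(2/π) · sin(x − π/4)/√x| ≤ C x^{−3/2}, where J₀′ is the derivative of J₀. -/
open Real in
theorem wallis_fact (n : ℕ) : ∏ i ∈ Finset.range n, ((2 * (i:ℝ) + 1) / (2 * i + 2)) =
    ((2*n).factorial : ℝ) / (4^n * (n.factorial:ℝ)^2) := by
  induction n with
  | zero => simp
  | succ k ih =>
    rw [Finset.prod_range_succ, ih, show 2 * (k+1) = 2*k+1+1 by ring, Nat.factorial_succ, Nat.factorial_succ, Nat.factorial_succ]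
    push_cast
    have := Nat.factorial_pos k
    field_simp
    ring

theorem J0_integral (x : ℝ) : J0 x = (1/Real.pi) * ∫ θ in (0:ℝ)..Real.pi, Real.cos (x * Real.sin θ) := by
  have h := intervalIntegral.hasSum_integral_of_dominated_convergence (μ := MeasureTheory.volume) (a := 0) (b := Real.pi)
    (F := fun (n:ℕ) (θ:ℝ) => (-1:ℝ)^n * (x * Real.sin θ)^(2*n) / ((2*n).factorial : ℝ))
    (f := fun θ => Real.cos (x * Real.sin θ))
    (fun (n:ℕ) (_:ℝ) => |x|^(2*n) / ((2*n).factorial : ℝ))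
    (fun n => by
      apply Continuous.aestronglyMeasurable; fun_prop)
    (fun n => by
      refine Filter.Eventually.of_forall fun t _ => ?_
      rw [norm_div, norm_mul, norm_pow, norm_pow, norm_mul]
      simp only [norm_neg, norm_one, one_pow, one_mul, Real.norm_eq_abs, Nat.abs_cast]
      gcongr
      exact mul_le_of_le_one_right (abs_nonneg _) (Real.abs_sin_le_one _))
    (Filter.Eventually.of_forall fun t _ => (Real.hasSum_cosh |x|).summable)
    (by simp)
    (Filter.Eventually.of_forall fun t _ => Real.hasSum_cos _)
  rw [← h.tsum_eq, J0, ← tsum_mul_left]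
  congr 1
  ext n
  have : (fun θ:ℝ => (-1:ℝ)^n * (x * Real.sin θ)^(2*n) / ((2*n).factorial : ℝ)) = fun θ => ((-1:ℝ)^n * x^(2*n) / ((2*n).factorial : ℝ)) * Real.sin θ ^ (2*n) := by
    ext θ; rw [mul_pow]; ring
  rw [this, intervalIntegral.integral_const_mul, integral_sin_pow_even, wallis_fact]
  have := Nat.factorial_pos n
  have := Nat.factorial_pos (2*n)
  have := Real.pi_pos
  have h4 : (4:ℝ)^n = 2^(2*n) := by rw [pow_mul]; norm_num
  rw [h4, div_pow]
  field_simp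

theorem J0_deriv (x : ℝ) : deriv J0 x = -(1/Real.pi) * ∫ θ in (0:ℝ)..Real.pi, Real.sin θ * Real.sin (x * Real.sin θ) := by
  have h := intervalIntegral.hasDerivAt_integral_of_dominated_loc_of_deriv_le (μ := MeasureTheory.volume) (a := 0) (b := Real.pi)
    (F := fun x θ => Real.cos (x * Real.sin θ)) (F' := fun x θ => - Real.sin (x * Real.sin θ) * Real.sin θ) (x₀ := x)
    (s := Set.univ) (bound := fun _ => 1) Filter.univ_mem
    (Filter.Eventually.of_forall fun y => by apply Continuous.aestronglyMeasurable; fun_prop)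
    (by apply Continuous.intervalIntegrable; fun_prop)
    (by apply Continuous.aestronglyMeasurable; fun_prop)
    (Filter.Eventually.of_forall fun t _ y _ => by
      rw [norm_mul, norm_neg]
      exact mul_le_one₀ (Real.abs_sin_le_one _) (norm_nonneg _) (Real.abs_sin_le_one _))
    (by simp)
    (Filter.Eventually.of_forall fun t _ y _ => by
      have := ((hasDerivAt_id y).mul_const (Real.sin t)).cos
      simpa using this)
  have h2 : J0 = fun x => (1/Real.pi) * ∫ θ in (0:ℝ)..Real.pi, Real.cos (x * Real.sin θ) := funext J0_integral
  rw [h2, (h.right.const_mul (1/Real.pi)).deriv]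
  rw [neg_mul, ← mul_neg, ← intervalIntegral.integral_neg]
  congr 2
  ext θ; ring

theorem J0_deriv' (x : ℝ) : deriv J0 x = -(2/Real.pi) * ∫ θ in (0:ℝ)..(Real.pi/2), Real.cos θ * Real.sin (x * Real.cos θ) := by
  rw [J0_deriv]
  have hc : Continuous fun θ => Real.cos θ * Real.sin (x * Real.cos θ) := by fun_prop
  have h1 : ∫ θ in (0:ℝ)..Real.pi, Real.sin θ * Real.sin (x * Real.sin θ) = ∫ θ in (-(Real.pi/2))..(Real.pi/2), Real.cos θ * Real.sin (x * Real.cos θ) := by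
    have := intervalIntegral.integral_comp_sub_right (a := 0) (b := Real.pi) (fun θ => Real.cos θ * Real.sin (x * Real.cos θ)) (Real.pi/2)
    simp only [Real.cos_sub_pi_div_two] at this
    rw [this]; congr 1 <;> ring
  have h2 : ∫ θ in (-(Real.pi/2))..0, Real.cos θ * Real.sin (x * Real.cos θ) = ∫ θ in (0:ℝ)..(Real.pi/2), Real.cos θ * Real.sin (x * Real.cos θ) := by
    have := intervalIntegral.integral_comp_neg (a := 0) (b := Real.pi/2) (fun θ => Real.cos θ * Real.sin (x * Real.cos θ))
    simp only [Real.cos_neg, neg_zero] at this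
    exact this.symm
  rw [h1, ← intervalIntegral.integral_add_adjacent_intervals (hc.intervalIntegrable _ 0) (hc.intervalIntegrable _ _), h2]
  ring

open Complex in
/-- amplitude -/
noncomputable def amp (w : ℂ) : ℂ := (1 - w) * (2 - w) ^ (-(1/2) : ℂ)

theorem subst_int (x : ℝ) : ∫ s in (0:ℝ)..1, amp ((s:ℂ)^2) * Complex.exp (-(Complex.I * x) * (s:ℂ)^2)
   = (1/2) * ∫ θ in (0:ℝ)..(Real.pi/2), (Real.cos θ : ℂ) * Complex.exp (Complex.I * x * (Real.cos θ - 1)) := by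
  have hamp : ContinuousOn (fun s : ℝ => amp ((s:ℂ)^2) * Complex.exp (-(Complex.I * x) * (s:ℂ)^2)) (Set.Icc (-1) 1) := by
    unfold amp
    apply ContinuousOn.mul _ (by fun_prop)
    apply ContinuousOn.mul (by fun_prop)
    apply ContinuousOn.cpow_const (by fun_prop)
    intro s hs
    left
    have : (2 - (s:ℂ)^2).re = 2 - s^2 := by norm_cast
    rw [this]; nlinarith [hs.1, hs.2]
  have hder : ∀ θ : ℝ, HasDerivAt (fun θ : ℝ => √2 * Real.sin (θ/2)) (√2 * (Real.cos (θ/2) * (1/2))) θ := fun θ => by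
    exact (((hasDerivAt_id θ).div_const 2).sin).const_mul _
  have hs2 : √2 * √2 = 2 := Real.mul_self_sqrt (by norm_num)
  have hsq : ∀ θ : ℝ, (√2 * Real.sin (θ/2))^2 = 1 - Real.cos θ := fun θ => by
    have := Real.cos_two_mul (θ/2)
    rw [show 2 * (θ/2) = θ by ring] at this
    have := Real.sin_sq_add_cos_sq (θ/2)
    nlinarith
  have h := intervalIntegral.integral_deriv_smul_comp'' (a := 0) (b := Real.pi/2) (f := fun θ : ℝ => √2 * Real.sin (θ/2))
    (f' := fun θ : ℝ => √2 * (Real.cos (θ/2) * (1/2)))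
    (g := fun s : ℝ => amp ((s:ℂ)^2) * Complex.exp (-(Complex.I * x) * (s:ℂ)^2)) (by fun_prop)
    (fun θ _ => (hder θ).hasDerivWithinAt) (by fun_prop) (hamp.mono (by
      rintro _ ⟨θ, hθ, rfl⟩
      rw [Set.uIcc_of_le (by positivity)] at hθ
      have := hsq θ
      have hc : 0 ≤ Real.cos θ := Real.cos_nonneg_of_mem_Icc ⟨by linarith [hθ.1, Real.pi_pos], hθ.2⟩
      exact abs_le.1 (abs_le_one_iff_mul_self_le_one.2 (by nlinarith))))
  have e1 : √2 * Real.sin (Real.pi/2/2) = 1 := by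
    rw [show Real.pi/2/2 = Real.pi/4 by ring, Real.sin_pi_div_four]; linarith
  simp only [e1, zero_div, Real.sin_zero, mul_zero] at h
  rw [← h, ← intervalIntegral.integral_const_mul]
  apply intervalIntegral.integral_congr
  intro θ hθ
  rw [Set.uIcc_of_le (by positivity)] at hθ
  have hc : 0 < Real.cos (θ/2) := Real.cos_pos_of_mem_Ioo ⟨by linarith [hθ.1, Real.pi_pos], by linarith [hθ.2, Real.pi_pos]⟩
  have e2 : ((√2 * Real.sin (θ/2) : ℝ) : ℂ)^2 = 1 - (Real.cos θ : ℂ) := by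
    rw [← Complex.ofReal_pow, hsq]; push_cast; rfl
  have e3 : (2 - (1 - (Real.cos θ : ℂ))) ^ (-(1/2) : ℂ) = (((√2 * Real.cos (θ/2))⁻¹ : ℝ) : ℂ) := by
    have : (2 - (1 - (Real.cos θ : ℂ))) = (((√2 * Real.cos (θ/2))^2 : ℝ) : ℂ) := by
      have : (√2 * Real.cos (θ/2))^2 = 1 + Real.cos θ := by
        have := Real.cos_two_mul (θ/2)
        rw [show 2 * (θ/2) = θ by ring] at this
        nlinarith
      rw [this]; push_cast; ring
    rw [this, show (-(1/2) : ℂ) = ((-(1/2) : ℝ) : ℂ) by push_cast; rfl, ← Complex.ofReal_cpow (by positivity)]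
    congr 1
    rw [Real.rpow_neg (by positivity), ← Real.sqrt_eq_rpow, Real.sqrt_sq (by positivity)]
  simp only [Function.comp_apply, Complex.real_smul]
  rw [e2, amp, e3]
  have h20 : (√2 : ℂ) ≠ 0 := by
    simp
  have hc0 : (Complex.cos (θ/2)) ≠ 0 := by
    have := hc.ne'
    exact_mod_cast this
  rw [show -(Complex.I * (x:ℂ)) * (1 - (Real.cos θ:ℂ)) = Complex.I * x * (Real.cos θ - 1) by ring]
  push_cast
  field_simp
  ring

theorem J0_deriv_eq (x : ℝ) : deriv J0 x = -(4/Real.pi) * (Complex.exp (Complex.I * x) * ∫ s in (0:ℝ)..1, amp ((s:ℂ)^2) * Complex.exp (-(Complex.I * x) * (s:ℂ)^2)).im := by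
  rw [subst_int, mul_left_comm, ← intervalIntegral.integral_const_mul, J0_deriv']
  have : (fun θ : ℝ => Complex.exp (Complex.I * x) * ((Real.cos θ : ℂ) * Complex.exp (Complex.I * x * (Real.cos θ - 1)))) =
     fun θ : ℝ => (Real.cos θ : ℂ) * Complex.exp ((x * Real.cos θ : ℝ) * Complex.I) := by
    ext θ
    rw [mul_left_comm, ← Complex.exp_add]
    congr 2; push_cast; ring
  rw [this]
  have h2 : (∫ θ in (0:ℝ)..(Real.pi/2), (Real.cos θ : ℂ) * Complex.exp ((x * Real.cos θ : ℝ) * Complex.I)).im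
     = ∫ θ in (0:ℝ)..(Real.pi/2), Real.cos θ * Real.sin (x * Real.cos θ) := by
    have := Complex.imCLM.intervalIntegral_comp_comm (μ := MeasureTheory.volume) (a := 0) (b := Real.pi/2) (f := fun θ : ℝ => (Real.cos θ : ℂ) * Complex.exp ((x * Real.cos θ : ℝ) * Complex.I)) (by apply Continuous.intervalIntegrable; fun_prop)
    simp only [Complex.imCLM_apply] at this
    rw [← this]
    congr 1
    ext θ
    rw [Complex.im_ofReal_mul, Complex.exp_ofReal_mul_I_im]
  rw [show (1/2 : ℂ) = ((1/2 : ℝ) : ℂ) by push_cast; rfl, Complex.im_ofReal_mul, h2]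
  ring

noncomputable def remK (w : ℂ) : ℂ := amp w - (2:ℂ) ^ (-(1/2) : ℂ) * Complex.exp (-(3/4) * w)

theorem remK_hasDerivAt (w : ℂ) (hw : w.re < 2) : HasDerivAt remK
    ((-1) * (2 - w) ^ (-(1/2) : ℂ) + (1 - w) * (-(1/2) * (2 - w) ^ (-(1/2) - 1 : ℂ) * (-1))
      - (2:ℂ) ^ (-(1/2) : ℂ) * (Complex.exp (-(3/4) * w) * (-(3/4)))) w := by
  have h1 : HasDerivAt (fun w : ℂ => 1 - w) (-1) w := by
    simpa using (hasDerivAt_id w).const_sub 1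
  have h2 : HasDerivAt (fun w : ℂ => 2 - w) (-1) w := by
    simpa using (hasDerivAt_id w).const_sub 2
  have h3 : HasDerivAt (fun w : ℂ => -(3/4) * w) (-(3/4)) w := by
    simpa using (hasDerivAt_id w).const_mul (-(3/4) : ℂ)
  have h4 := h2.cpow_const (c := (-(1/2) : ℂ)) (Or.inl (by simp; linarith))
  exact (h1.mul h4).sub (h3.cexp.const_mul _)

theorem exists_R : ∃ R : ℂ → ℂ, DifferentiableOn ℂ R {w | w.re < 2} ∧ ∀ w, remK w = w^2 * R w := by
  have hU : {w : ℂ | w.re < 2} ∈ nhds (0:ℂ) := by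
    apply (isOpen_lt Complex.continuous_re continuous_const).mem_nhds
    simp
  refine ⟨dslope (dslope remK 0) 0, ?_, ?_⟩
  · rw [Complex.differentiableOn_dslope hU, Complex.differentiableOn_dslope hU]
    exact fun w hw => (remK_hasDerivAt w hw).differentiableAt.differentiableWithinAt
  · intro w
    have h0 : remK 0 = 0 := by simp [remK, amp]
    have h1 : dslope remK 0 0 = 0 := by
      rw [dslope_same, (remK_hasDerivAt 0 (by simp)).deriv]
      have : (2:ℂ) ^ (-(1/2) - 1 : ℂ) = 2 ^ (-(1/2) : ℂ) / 2 := by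
        rw [Complex.cpow_sub _ _ two_ne_zero, Complex.cpow_one]
      simp only [sub_zero, mul_zero, Complex.exp_zero, this]
      ring
    have a := sub_smul_dslope remK 0 w
    have b := sub_smul_dslope (dslope remK 0) 0 w
    rw [h0] at a
    rw [h1] at b
    simp only [sub_zero, smul_eq_mul] at a b
    rw [← a, ← b]; ring

theorem rem_bound : ∃ M : ℝ, 0 ≤ M ∧ ∀ x : ℝ, 1 ≤ x →
    ‖(∫ s in (0:ℝ)..1, remK ((s:ℂ)^2) * Complex.exp (-(Complex.I * x) * (s:ℂ)^2))
      + remK 1 * Complex.exp (-(Complex.I * x)) / (2 * (Complex.I * x))‖ ≤ M / x^2 := by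
  obtain ⟨R, hR, hK⟩ := exists_R
  have hU : IsOpen {w : ℂ | w.re < 2} := isOpen_lt Complex.continuous_re continuous_const
  have hR1 := hR.deriv hU
  have hR2 := hR1.deriv hU
  have hmem : ∀ s : ℝ, s ∈ Set.uIcc (0:ℝ) 1 → ((s:ℂ)^2) ∈ {w : ℂ | w.re < 2} := by
    intro s hs
    rw [Set.uIcc_of_le zero_le_one] at hs
    have : ((s:ℂ)^2).re = s^2 := by norm_cast
    simp only [Set.mem_ofPred_eq, this]
    nlinarith [hs.1, hs.2]
  have hcs : ContinuousOn (fun s : ℝ => (s:ℂ)^2) (Set.uIcc (0:ℝ) 1) := by fun_prop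
  have c0 : ContinuousOn (fun s : ℝ => R ((s:ℂ)^2)) (Set.uIcc (0:ℝ) 1) := hR.continuousOn.comp hcs hmem
  have c1 : ContinuousOn (fun s : ℝ => deriv R ((s:ℂ)^2)) (Set.uIcc (0:ℝ) 1) := hR1.continuousOn.comp hcs hmem
  have c2 : ContinuousOn (fun s : ℝ => deriv (deriv R) ((s:ℂ)^2)) (Set.uIcc (0:ℝ) 1) := hR2.continuousOn.comp hcs hmem
  set m1 : ℝ → ℂ := fun s => 3 * R ((s:ℂ)^2) + 12 * (s:ℂ)^2 * deriv R ((s:ℂ)^2) + 4 * (s:ℂ)^4 * deriv (deriv R) ((s:ℂ)^2) with hm1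
  have cO : ContinuousOn (fun s : ℝ => (s:ℂ)) (Set.uIcc (0:ℝ) 1) := by fun_prop
  have cm1 : ContinuousOn m1 (Set.uIcc (0:ℝ) 1) :=
    ((continuousOn_const.mul c0).add ((continuousOn_const.mul (cO.pow 2)).mul c1)).add
      ((continuousOn_const.mul (cO.pow 4)).mul c2)
  set B : ℂ := 3 * R 1 + 2 * deriv R 1 with hB
  refine ⟨(∫ s in (0:ℝ)..1, ‖m1 s‖) + ‖B‖, ?_, ?_⟩
  · have : 0 ≤ ∫ s in (0:ℝ)..1, ‖m1 s‖ := intervalIntegral.integral_nonneg zero_le_one fun _ _ => norm_nonneg _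
    positivity
  intro x hx
  set d : ℂ := Complex.I * x with hd
  have hd0 : d ≠ 0 := by
    have : (x:ℂ) ≠ 0 := by exact_mod_cast (by linarith : x ≠ 0)
    simp [hd, this]
  have hdn : ‖d‖ = x := by simp [hd]; linarith
  have hP : ∀ s : ℝ, ‖Complex.exp (-d * (s:ℂ)^2)‖ = 1 := fun s => by
    rw [show -d * (s:ℂ)^2 = ((-x * s^2 : ℝ) : ℂ) * Complex.I by rw [hd]; push_cast; ring]
    exact Complex.norm_exp_ofReal_mul_I _
  have cP : ContinuousOn (fun s : ℝ => Complex.exp (-d * (s:ℂ)^2)) (Set.uIcc (0:ℝ) 1) := by fun_prop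
  have hder : ∀ s ∈ Set.uIcc (0:ℝ) 1, HasDerivAt (fun s : ℝ =>
      -((s:ℂ)^3 * R ((s:ℂ)^2)) * Complex.exp (-d * (s:ℂ)^2) / (2*d)
      - (3 * (s:ℂ) * R ((s:ℂ)^2) + 2 * (s:ℂ)^3 * deriv R ((s:ℂ)^2)) * Complex.exp (-d * (s:ℂ)^2) / (2*d)^2)
      ((s:ℂ)^4 * R ((s:ℂ)^2) * Complex.exp (-d * (s:ℂ)^2) - m1 s * Complex.exp (-d * (s:ℂ)^2) / (2*d)^2) s := by
    intro s hs
    have hs' := hU.mem_nhds (hmem s hs)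
    have i0 : HasDerivAt (fun z : ℂ => z) 1 (s:ℂ) := hasDerivAt_id _
    have i2 : HasDerivAt (fun z : ℂ => z^2) (2 * (s:ℂ)) (s:ℂ) := by simpa using hasDerivAt_pow 2 (s:ℂ)
    have i3 : HasDerivAt (fun z : ℂ => z^3) (3 * (s:ℂ)^2) (s:ℂ) := by simpa using hasDerivAt_pow 3 (s:ℂ)
    have r0 : HasDerivAt (fun z : ℂ => R (z^2)) (deriv R ((s:ℂ)^2) * (2 * (s:ℂ))) (s:ℂ) :=
      HasDerivAt.comp (s:ℂ) (hR.differentiableAt hs').hasDerivAt i2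
    have r1 : HasDerivAt (fun z : ℂ => deriv R (z^2)) (deriv (deriv R) ((s:ℂ)^2) * (2 * (s:ℂ))) (s:ℂ) :=
      HasDerivAt.comp (h₂ := deriv R) (s:ℂ) (hR1.differentiableAt hs').hasDerivAt i2
    have p := (i2.const_mul (-d)).cexp
    have t1 := (((i3.mul r0).neg).mul p).div_const (2*d)
    have t2 := ((((i0.const_mul 3).mul r0).add ((i3.const_mul 2).mul r1)).mul p).div_const ((2*d)^2)
    have := (t1.sub t2).comp_ofReal
    refine this.congr_deriv ?_
    simp only [hm1, Pi.mul_apply, Pi.add_apply, Pi.neg_apply]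
    field_simp
    ring
  have hint1 : IntervalIntegrable (fun s : ℝ => (s:ℂ)^4 * R ((s:ℂ)^2) * Complex.exp (-d * (s:ℂ)^2)) MeasureTheory.volume 0 1 :=
    (((cO.pow 4).mul c0).mul cP).intervalIntegrable
  have hint2 : IntervalIntegrable (fun s : ℝ => m1 s * Complex.exp (-d * (s:ℂ)^2) / (2*d)^2) MeasureTheory.volume 0 1 :=
    ((cm1.mul cP).div_const _).intervalIntegrable
  have hF := intervalIntegral.integral_eq_sub_of_hasDerivAt hder (hint1.sub hint2)
  rw [intervalIntegral.integral_sub hint1 hint2, intervalIntegral.integral_div] at hF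
  have e1 : (fun s : ℝ => remK ((s:ℂ)^2) * Complex.exp (-d * (s:ℂ)^2)) = fun s : ℝ => (s:ℂ)^4 * R ((s:ℂ)^2) * Complex.exp (-d * (s:ℂ)^2) := by
    ext s; rw [hK]; ring
  have e2 : remK 1 = R 1 := by rw [hK]; ring
  rw [e1, e2]
  have e3 : (∫ s in (0:ℝ)..1, (s:ℂ)^4 * R ((s:ℂ)^2) * Complex.exp (-d * (s:ℂ)^2)) + R 1 * Complex.exp (-d) / (2*d)
     = ((∫ s in (0:ℝ)..1, m1 s * Complex.exp (-d * (s:ℂ)^2)) - B * Complex.exp (-d)) / (2*d)^2 := by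
    rw [sub_eq_iff_eq_add.1 hF, hB]
    simp
    ring
  rw [e3, norm_div]
  have n1 : ‖∫ s in (0:ℝ)..1, m1 s * Complex.exp (-d * (s:ℂ)^2)‖ ≤ ∫ s in (0:ℝ)..1, ‖m1 s‖ := by
    refine (intervalIntegral.norm_integral_le_integral_norm zero_le_one).trans_eq ?_
    congr 1; ext s; rw [norm_mul, hP, mul_one]
  have n2 : ‖B * Complex.exp (-d)‖ = ‖B‖ := by
    have := hP 1
    rw [norm_mul]; simp at this; rw [this, mul_one]
  have n3 : ‖(2*d)^2‖ = 4 * x^2 := by rw [norm_pow, norm_mul, hdn]; norm_num; ring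
  rw [n3]
  have n4 := norm_sub_le (∫ s in (0:ℝ)..1, m1 s * Complex.exp (-d * (s:ℂ)^2)) (B * Complex.exp (-d))
  have n5 : 0 ≤ (∫ s in (0:ℝ)..1, ‖m1 s‖) + ‖B‖ := by linarith [norm_nonneg (∫ s in (0:ℝ)..1, m1 s * Complex.exp (-d * (s:ℂ)^2)), norm_nonneg B]
  apply div_le_div₀ n5 (by linarith) (by positivity) (by nlinarith)

open MeasureTheory in
theorem tail_bound_s2 : ∃ M : ℝ, 0 ≤ M ∧ ∀ c : ℂ, c.re = 3/4 →
    ‖(∫ s in Set.Ioi (1:ℝ), Complex.exp (-c * (s:ℂ)^2)) - Complex.exp (-c) / (2 * c)‖ ≤ M / ‖c‖^2 := by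
  have hre : IntegrableOn (fun s : ℝ => Real.exp (-(3/4) * s^2)) (Set.Ioi 1) :=
    (integrable_exp_neg_mul_sq (by norm_num)).integrableOn
  refine ⟨1 + ∫ s in Set.Ioi (1:ℝ), Real.exp (-(3/4) * s^2), ?_, ?_⟩
  · have : 0 ≤ ∫ s in Set.Ioi (1:ℝ), Real.exp (-(3/4) * s^2) := integral_nonneg fun _ => (Real.exp_pos _).le
    positivity
  intro c hc
  have hc0 : c ≠ 0 := by rintro rfl; norm_num at hc
  have hn : ∀ s : ℝ, ‖Complex.exp (-c * (s:ℂ)^2)‖ = Real.exp (-(3/4) * s^2) := fun s => by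
    rw [Complex.norm_exp, ← Complex.ofReal_pow, Complex.re_mul_ofReal, Complex.neg_re, hc]
  have i1 : IntegrableOn (fun s : ℝ => Complex.exp (-c * (s:ℂ)^2)) (Set.Ioi 1) :=
    (integrable_cexp_neg_mul_sq (by rw [hc]; norm_num)).integrableOn
  have hle : ∀ s ∈ Set.Ioi (1:ℝ), ‖Complex.exp (-c * (s:ℂ)^2) / (s:ℂ)^4‖ ≤ Real.exp (-(3/4) * s^2) := by
    intro s hs
    have hs : 1 < s := hs
    rw [norm_div, hn]
    apply div_le_self (Real.exp_pos _).le
    rw [norm_pow, Complex.norm_real]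
    apply one_le_pow₀
    rw [Real.norm_eq_abs]; exact hs.le.trans (le_abs_self _)
  have i2 : IntegrableOn (fun s : ℝ => Complex.exp (-c * (s:ℂ)^2) / (s:ℂ)^4) (Set.Ioi 1) := by
    refine Integrable.mono' hre ?_ ((ae_restrict_iff' measurableSet_Ioi).2 (Filter.Eventually.of_forall hle))
    apply Measurable.aestronglyMeasurable
    fun_prop
  have hder : ∀ s ∈ Set.Ici (1:ℝ), HasDerivAt (fun s : ℝ => -(Complex.exp (-c * (s:ℂ)^2) / (2 * c * (s:ℂ)))
      + Complex.exp (-c * (s:ℂ)^2) / (4 * c^2 * (s:ℂ)^3))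
      (Complex.exp (-c * (s:ℂ)^2) - 3 / (4*c^2) * (Complex.exp (-c * (s:ℂ)^2) / (s:ℂ)^4)) s := by
    intro s hs
    have hs : 1 ≤ s := hs
    have hs0 : (s:ℂ) ≠ 0 := by exact_mod_cast (by linarith : s ≠ 0)
    have i0 : HasDerivAt (fun z : ℂ => z) 1 (s:ℂ) := hasDerivAt_id _
    have i2 : HasDerivAt (fun z : ℂ => z^2) (2 * (s:ℂ)) (s:ℂ) := by simpa using hasDerivAt_pow 2 (s:ℂ)
    have i3 : HasDerivAt (fun z : ℂ => z^3) (3 * (s:ℂ)^2) (s:ℂ) := by simpa using hasDerivAt_pow 3 (s:ℂ)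
    have p := (i2.const_mul (-c)).cexp
    have t1 := (p.div (i0.const_mul (2*c)) (by simp [hc0, hs0])).neg
    have t2 := p.div (i3.const_mul (4*c^2)) (by simp [hc0, hs0])
    have := (t1.add t2).comp_ofReal
    refine this.congr_deriv ?_
    field_simp
    ring
  have hlim0 : Filter.Tendsto (fun s : ℝ => Complex.exp (-c * (s:ℂ)^2)) Filter.atTop (nhds 0) := by
    rw [tendsto_zero_iff_norm_tendsto_zero]
    simp_rw [hn]
    apply Real.tendsto_exp_atBot.comp
    exact (Filter.tendsto_pow_atTop two_ne_zero).const_mul_atTop_of_neg (by norm_num)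
  have hinv : Filter.Tendsto (fun s : ℝ => ((s:ℂ))⁻¹) Filter.atTop (nhds 0) := by
    have := (Complex.continuous_ofReal.tendsto 0).comp tendsto_inv_atTop_zero
    simpa [Function.comp_def] using this
  have hlim : Filter.Tendsto (fun s : ℝ => -(Complex.exp (-c * (s:ℂ)^2) / (2 * c * (s:ℂ)))
      + Complex.exp (-c * (s:ℂ)^2) / (4 * c^2 * (s:ℂ)^3)) Filter.atTop (nhds 0) := by
    have := ((hlim0.mul hinv).mul_const (-(1/(2*c)))).add ((hlim0.mul (hinv.pow 3)).mul_const (1/(4*c^2)))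
    simp only [zero_mul, add_zero] at this
    refine this.congr fun s => ?_
    simp only [div_eq_mul_inv, mul_inv, inv_pow]
    ring
  have hF := integral_Ioi_of_hasDerivAt_of_tendsto' hder (i1.sub (i2.const_mul (3/(4*c^2)))) hlim
  rw [integral_sub i1 (i2.const_mul _), integral_const_mul] at hF
  have e : (∫ s in Set.Ioi (1:ℝ), Complex.exp (-c * (s:ℂ)^2)) - Complex.exp (-c) / (2 * c)
     = (3/4 * (∫ s in Set.Ioi (1:ℝ), Complex.exp (-c * (s:ℂ)^2) / (s:ℂ)^4) - 1/4 * Complex.exp (-c)) / c^2 := by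
    rw [sub_eq_iff_eq_add.1 hF]
    simp
    field_simp
    ring
  rw [e, norm_div, norm_pow]
  gcongr
  have n1 : ‖∫ s in Set.Ioi (1:ℝ), Complex.exp (-c * (s:ℂ)^2) / (s:ℂ)^4‖ ≤ ∫ s in Set.Ioi (1:ℝ), Real.exp (-(3/4) * s^2) :=
    norm_integral_le_of_norm_le hre ((ae_restrict_iff' measurableSet_Ioi).2 (Filter.Eventually.of_forall hle))
  have n2 : ‖Complex.exp (-c)‖ ≤ 1 := by
    have := hn 1
    simp only [Complex.ofReal_one, one_pow, mul_one] at this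
    rw [this, Real.exp_le_one_iff]; norm_num
  refine (norm_sub_le _ _).trans ?_
  rw [norm_mul, norm_mul, show ‖(3/4:ℂ)‖ = 3/4 by norm_num, show ‖(1/4:ℂ)‖ = 1/4 by norm_num]
  have := norm_nonneg (∫ s in Set.Ioi (1:ℝ), Complex.exp (-c * (s:ℂ)^2) / (s:ℂ)^4)
  linarith

theorem sqrt_bound (x : ℝ) (hx : 1 ≤ x) :
    ‖((Real.pi:ℂ) / (3/4 + Complex.I * x)) ^ (1/2 : ℂ) - (√(Real.pi / x) : ℝ) * Complex.exp (-(Real.pi/4 : ℝ) * Complex.I)‖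
      ≤ 3 * Real.pi * x ^ (-(3:ℝ)/2) := by
  set c : ℂ := 3/4 + Complex.I * x with hc
  have hx0 : (x:ℂ) ≠ 0 := by exact_mod_cast (by linarith : x ≠ 0)
  have hcre : c.re = 3/4 := by simp [hc]
  have hcim : c.im = x := by simp [hc]
  have hc0 : c ≠ 0 := by intro h; rw [h] at hcre; norm_num at hcre
  have hcn : x ≤ ‖c‖ := by rw [← hcim]; exact (le_abs_self _).trans (Complex.abs_im_le_norm c)
  set Z := ((Real.pi:ℂ) / c) ^ (1/2 : ℂ) with hZ
  set Y := (√(Real.pi / x) : ℝ) * Complex.exp (-(Real.pi/4 : ℝ) * Complex.I) with hY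
  have hZ2 : Z^2 = Real.pi / c := by
    rw [hZ, show (1/2 : ℂ) = ((2:ℕ):ℂ)⁻¹ by norm_num, Complex.cpow_nat_inv_pow _ two_ne_zero]
  have hY2 : Y^2 = Real.pi / (Complex.I * x) := by
    rw [hY, mul_pow, ← Complex.exp_nat_mul, ← Complex.ofReal_pow, Real.sq_sqrt (div_nonneg Real.pi_pos.le (by linarith))]
    rw [show ((2:ℕ):ℂ) * (-(Real.pi/4 : ℝ) * Complex.I) = -(Real.pi/2 * Complex.I) by push_cast; ring,
      Complex.exp_neg, Complex.exp_pi_div_two_mul_I]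
    push_cast
    field_simp
  have hZre : 0 ≤ Z.re := by
    have : 0 ≤ Z.re := by
      rw [hZ, Complex.cpow_def_of_ne_zero (by simp [hc0, Real.pi_ne_zero]), Complex.exp_re]
      apply mul_nonneg (Real.exp_pos _).le
      have e : (Complex.log (Real.pi / c) * (1/2)).im = (Complex.arg (Real.pi / c)) / 2 := by
        rw [show (1/2 : ℂ) = ((1/2:ℝ):ℂ) by push_cast; rfl, Complex.im_mul_ofReal, Complex.log_im]; ring
      rw [e]
      apply Real.cos_nonneg_of_mem_Icc
      have := Complex.neg_pi_lt_arg (Real.pi / c)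
      have := Complex.arg_le_pi (Real.pi / c)
      constructor <;> linarith
    exact this
  have hYre : Y.re = √(Real.pi / x) * (√2 / 2) := by
    rw [hY, Complex.re_ofReal_mul, ← Complex.ofReal_neg, Complex.exp_ofReal_mul_I_re, Real.cos_neg, Real.cos_pi_div_four]
  have hlow : 1 / √x ≤ ‖Z + Y‖ := by
    refine le_trans ?_ (Complex.re_le_norm _)
    rw [Complex.add_re, hYre, Real.sqrt_div Real.pi_pos.le]
    have hp : 1 ≤ √Real.pi * (√2/2) := by
      rw [show √Real.pi * (√2/2) = √(Real.pi * 2)/2 by rw [Real.sqrt_mul Real.pi_pos.le]; ring]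
      rw [le_div_iff₀ two_pos]
      apply Real.le_sqrt_of_sq_le
      nlinarith [Real.pi_gt_three]
    have : 1/√x ≤ √Real.pi * (√2/2) / √x := by gcongr
    calc _ ≤ _ := this
      _ = √Real.pi / √x * (√2/2) := by ring
      _ ≤ _ := by linarith
  have hprod : ‖Z - Y‖ * ‖Z + Y‖ ≤ Real.pi / x^2 := by
    rw [← norm_mul, show (Z-Y)*(Z+Y) = Z^2-Y^2 by ring, hZ2, hY2]
    have : (Real.pi:ℂ) / c - Real.pi / (Complex.I * x) = -(3/4 * Real.pi) / (c * (Complex.I * x)) := by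
      field_simp
      rw [hc]; ring
    rw [this, norm_div, norm_mul, norm_neg, norm_mul, norm_mul]
    simp only [Complex.norm_I, Complex.norm_real, one_mul, Real.norm_eq_abs, abs_of_pos Real.pi_pos, abs_of_pos (by linarith : 0 < x)]
    rw [pow_two]
    gcongr
    norm_num
    linarith [Real.pi_pos]
  have hsx : 0 < √x := Real.sqrt_pos.2 (by linarith)
  have key : ‖Z - Y‖ ≤ Real.pi / x^2 * √x := by
    have : ‖Z - Y‖ * (1/√x) ≤ Real.pi / x^2 := (mul_le_mul_of_nonneg_left hlow (norm_nonneg _)).trans hprod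
    rw [mul_one_div, div_le_iff₀ hsx] at this
    exact this
  have e : Real.pi / x^2 * √x = Real.pi * x ^ (-(3:ℝ)/2) := by
    rw [Real.sqrt_eq_rpow, show (-(3:ℝ)/2) = 1/2 - (2:ℕ) by norm_num, Real.rpow_sub_natCast (by linarith)]
    ring
  rw [e] at key
  have := Real.rpow_nonneg (by linarith : 0 ≤ x) (-(3:ℝ)/2)
  nlinarith [Real.pi_pos, mul_nonneg Real.pi_pos.le this]

open MeasureTheory in
theorem main_bound : ∃ M : ℝ, 0 ≤ M ∧ ∀ x : ℝ, 1 ≤ x →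
    ‖(∫ s in (0:ℝ)..1, amp ((s:ℂ)^2) * Complex.exp (-(Complex.I * x) * (s:ℂ)^2))
      - (2:ℂ) ^ (-(1/2) : ℂ) * ((√(Real.pi / x) : ℝ) * Complex.exp (-(Real.pi/4 : ℝ) * Complex.I)) / 2‖ ≤ M * x ^ (-(3:ℝ)/2) := by
  obtain ⟨M1, hM1, h1⟩ := rem_bound
  obtain ⟨M2, hM2, h2⟩ := tail_bound_s2
  refine ⟨M1 + M2 + 1 + 3 * Real.pi, by positivity, ?_⟩
  intro x hx
  have b1 := h1 x hx
  have b2 := h2 (3/4 + Complex.I * x) (by simp)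
  have b3 := sqrt_bound x hx
  set d : ℂ := Complex.I * x with hd
  set c : ℂ := 3/4 + d with hc
  set Y := (√(Real.pi / x) : ℝ) * Complex.exp (-(Real.pi/4 : ℝ) * Complex.I) with hY
  set g0 : ℂ := (2:ℂ) ^ (-(1/2) : ℂ) with hg0
  have hx0 : (x:ℂ) ≠ 0 := by exact_mod_cast (by linarith : x ≠ 0)
  have hd0 : d ≠ 0 := by simp [hd, hx0]
  have hdn : ‖d‖ = x := by simp [hd]; linarith
  have hcre : c.re = 3/4 := by simp [hc, hd]
  have hcim : c.im = x := by simp [hc, hd]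
  have hc0 : c ≠ 0 := by intro h; rw [h] at hcre; norm_num at hcre
  have hcn : x ≤ ‖c‖ := by rw [← hcim]; exact (le_abs_self _).trans (Complex.abs_im_le_norm c)
  have hg0n : ‖g0‖ ≤ 1 := by
    rw [hg0, show (2:ℂ) = ((2:ℝ):ℂ) by push_cast; rfl, Complex.norm_cpow_eq_rpow_re_of_pos two_pos]
    apply Real.rpow_le_one_of_one_le_of_nonpos <;> norm_num
  have i1 : Integrable (fun s : ℝ => Complex.exp (-c * (s:ℂ)^2)) :=
    integrable_cexp_neg_mul_sq (by rw [hcre]; norm_num)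
  have hG : ∫ s in (0:ℝ)..1, Complex.exp (-c * (s:ℂ)^2) = ((Real.pi:ℂ) / c) ^ (1/2 : ℂ) / 2 - ∫ s in Set.Ioi (1:ℝ), Complex.exp (-c * (s:ℂ)^2) := by
    rw [← integral_gaussian_complex_Ioi (by rw [hcre]; norm_num)]
    exact (intervalIntegral.integral_Ioi_sub_Ioi i1.integrableOn zero_le_one).symm
  have hrc : ContinuousOn (fun s : ℝ => remK ((s:ℂ)^2) * Complex.exp (-d * (s:ℂ)^2)) (Set.uIcc (0:ℝ) 1) := by
    apply ContinuousOn.mul _ (by fun_prop)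
    intro s hs
    rw [Set.uIcc_of_le zero_le_one] at hs
    have h : ((s:ℂ)^2).re = s^2 := by norm_cast
    have := (remK_hasDerivAt ((s:ℂ)^2) (by rw [h]; nlinarith [hs.1, hs.2])).continuousAt
    have h3 : ContinuousAt (fun s : ℝ => (s:ℂ)^2) s := by fun_prop
    exact (ContinuousAt.comp (f := fun s : ℝ => (s:ℂ)^2) this h3).continuousWithinAt
  have hsplit : (fun s : ℝ => amp ((s:ℂ)^2) * Complex.exp (-d * (s:ℂ)^2)) = fun s : ℝ =>
      remK ((s:ℂ)^2) * Complex.exp (-d * (s:ℂ)^2) + g0 * Complex.exp (-c * (s:ℂ)^2) := by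
    ext s
    rw [remK, show -c * (s:ℂ)^2 = -(3/4) * (s:ℂ)^2 + -d * (s:ℂ)^2 by rw [hc]; ring, Complex.exp_add]
    ring
  have hK1 : remK 1 * Complex.exp (-d) = - g0 * Complex.exp (-c) := by
    rw [show -c = -(3/4) * 1 + -d by rw [hc]; ring, Complex.exp_add, remK, amp]
    ring
  rw [hsplit, intervalIntegral.integral_add hrc.intervalIntegrable (i1.intervalIntegrable.const_mul _), intervalIntegral.integral_const_mul, hG]
  rw [hK1] at b1
  set Z := ((Real.pi:ℂ) / c) ^ (1/2 : ℂ)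
  set T := ∫ s in Set.Ioi (1:ℝ), Complex.exp (-c * (s:ℂ)^2)
  set A := ∫ s in (0:ℝ)..1, remK ((s:ℂ)^2) * Complex.exp (-d * (s:ℂ)^2)
  have hid : A + g0 * (Z/2 - T) - g0 * Y / 2 = (A + -g0 * Complex.exp (-c) / (2*d)) - g0 * (T - Complex.exp (-c) / (2*c))
      + g0 * (Z - Y) / 2 + g0 * Complex.exp (-c) * (3/8) / (c * d) := by
    have : (3/8 : ℂ) / (c*d) = 1/(2*d) - 1/(2*c) := by
      field_simp
      rw [hc]; ring
    rw [mul_div_assoc (g0 * Complex.exp (-c)), this]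
    ring
  have hE : ‖Complex.exp (-c)‖ ≤ 1 := by
    rw [Complex.norm_exp, Complex.neg_re, hcre, Real.exp_le_one_iff]; norm_num
  have x2 : 1 / x^2 ≤ x ^ (-(3:ℝ)/2) := by
    rw [one_div, ← Real.rpow_natCast, ← Real.rpow_neg (by linarith)]
    apply Real.rpow_le_rpow_of_exponent_le hx; norm_num
  have t2 : ‖g0 * (T - Complex.exp (-c) / (2*c))‖ ≤ M2 / x^2 := by
    rw [norm_mul]
    calc _ ≤ 1 * (M2 / ‖c‖^2) := by gcongr
      _ ≤ _ := by rw [one_mul]; gcongr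
  have t3 : ‖g0 * (Z - Y) / 2‖ ≤ 3 * Real.pi * x ^ (-(3:ℝ)/2) := by
    rw [norm_div, norm_mul, show ‖(2:ℂ)‖ = 2 by norm_num]
    have : ‖g0‖ * ‖Z - Y‖ ≤ 1 * ‖Z - Y‖ := by gcongr
    linarith [norm_nonneg (Z - Y)]
  have t4 : ‖g0 * Complex.exp (-c) * (3/8) / (c * d)‖ ≤ 1 / x^2 := by
    rw [norm_div, norm_mul, norm_mul, norm_mul, hdn, show ‖(3/8:ℂ)‖ = 3/8 by norm_num, pow_two]
    gcongr
    have : ‖g0‖ * ‖Complex.exp (-c)‖ ≤ 1 := mul_le_one₀ hg0n (norm_nonneg _) hE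
    linarith
  rw [hid]
  have e1 : M1 / x^2 ≤ M1 * x ^ (-(3:ℝ)/2) := by rw [div_eq_mul_one_div]; gcongr
  have e2 : M2 / x^2 ≤ M2 * x ^ (-(3:ℝ)/2) := by rw [div_eq_mul_one_div]; gcongr
  refine (norm_add_le _ _).trans ?_
  have := norm_add_le ((A + -g0 * Complex.exp (-c) / (2*d)) - g0 * (T - Complex.exp (-c) / (2*c))) (g0 * (Z - Y) / 2)
  have := norm_sub_le (A + -g0 * Complex.exp (-c) / (2*d)) (g0 * (T - Complex.exp (-c) / (2*c)))
  linarith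

/-- Asymptotics of `J₀′`: there is `C > 0` such that for all `x ≥ 1`,
`|J₀′(x) + √(2/π) sin(x − π/4)/√x| ≤ C x^{−3/2}`. -/
theorem J0_deriv_asymptotics :
    ∃ C : ℝ, 0 < C ∧ ∀ x : ℝ, 1 ≤ x →
      |deriv J0 x + Real.sqrt (2 / Real.pi) * Real.sin (x - Real.pi / 4) / Real.sqrt x| ≤
        C * x ^ (-(3 : ℝ) / 2) := by
  obtain ⟨M, hM, h⟩ := main_bound
  have hpi := Real.pi_pos
  refine ⟨4 / Real.pi * M + 1, by positivity, ?_⟩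
  intro x hx
  have hb := h x hx
  rw [J0_deriv_eq]
  set E := ∫ s in (0:ℝ)..1, amp ((s:ℂ)^2) * Complex.exp (-(Complex.I * x) * (s:ℂ)^2)
  set W := (2:ℂ) ^ (-(1/2) : ℂ) * ((√(Real.pi / x) : ℝ) * Complex.exp (-(Real.pi/4 : ℝ) * Complex.I)) / 2 with hW
  have hsx : 0 < √x := Real.sqrt_pos.2 (by linarith)
  have hWim : (Complex.exp (Complex.I * x) * W).im = (√2)⁻¹ * √(Real.pi/x) / 2 * Real.sin (x - Real.pi/4) := by
    have hg : (2:ℂ) ^ (-(1/2) : ℂ) = (((√2)⁻¹ : ℝ) : ℂ) := by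
      rw [show (2:ℂ) = ((2:ℝ):ℂ) by push_cast; rfl, show (-(1/((2:ℝ):ℂ)) : ℂ) = ((-(1/2) : ℝ) : ℂ) by push_cast; rfl, ← Complex.ofReal_cpow (by norm_num),
        Real.rpow_neg (by norm_num), ← Real.sqrt_eq_rpow]
    have : Complex.exp (Complex.I * x) * W = (((√2)⁻¹ * √(Real.pi/x) / 2 : ℝ) : ℂ) * Complex.exp (((x - Real.pi/4 : ℝ) : ℂ) * Complex.I) := by
      rw [hW, hg, show (((x - Real.pi/4 : ℝ) : ℂ) * Complex.I) = Complex.I * x + -(Real.pi/4 : ℝ) * Complex.I by push_cast; ring, Complex.exp_add]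
      push_cast
      ring
    rw [this, Complex.im_ofReal_mul, Complex.exp_ofReal_mul_I_im]
  have hmain : √(2 / Real.pi) * Real.sin (x - Real.pi / 4) / √x = 4 / Real.pi * (Complex.exp (Complex.I * x) * W).im := by
    rw [hWim, Real.sqrt_div hpi.le, Real.sqrt_div (by norm_num)]
    have h2 : √2 * √2 = 2 := Real.mul_self_sqrt (by norm_num)
    have hp : √Real.pi * √Real.pi = Real.pi := Real.mul_self_sqrt hpi.le
    have hp0 : 0 < √Real.pi := Real.sqrt_pos.2 hpi
    have h20 : 0 < √2 := Real.sqrt_pos.2 two_pos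
    have : √2 / √Real.pi = 4 / Real.pi * ((√2)⁻¹ * √Real.pi / 2) := by
      rw [show 4 / Real.pi = 4 / (√Real.pi * √Real.pi) by rw [hp]]
      field_simp
      nlinarith
    rw [this]; ring
  rw [hmain, show -(4 / Real.pi) * (Complex.exp (Complex.I * x) * E).im + 4 / Real.pi * (Complex.exp (Complex.I * x) * W).im
    = -(4 / Real.pi) * (Complex.exp (Complex.I * x) * (E - W)).im by rw [mul_sub, Complex.sub_im]; ring]
  rw [abs_mul, abs_neg, abs_of_pos (by positivity : 0 < 4/Real.pi)]
  have h1 : |(Complex.exp (Complex.I * x) * (E - W)).im| ≤ M * x ^ (-(3:ℝ)/2) := by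
    refine (Complex.abs_im_le_norm _).trans ?_
    rw [norm_mul, mul_comm Complex.I, Complex.norm_exp_ofReal_mul_I, one_mul]
    exact hb
  have h3 : 0 ≤ x ^ (-(3:ℝ)/2) := Real.rpow_nonneg (by linarith) _
  calc _ ≤ 4 / Real.pi * (M * x ^ (-(3:ℝ)/2)) := by gcongr
    _ ≤ _ := by nlinarith
end

section
/- For every κ > 0 there exists a constant C > 0 such that for every n ≥ 1, the n-th positive zero of J₀ satisfies |z_n − π(n − 1/4) − 1/(8π(n − 1/4))| ≤ C n^{−(2−κ)}. -/
open MeasureTheory Set Filter Topology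

namespace BZ

lemma coef (j : ℕ) : (∏ i ∈ Finset.range j, (2 * (i:ℝ) + 1) / (2 * i + 2)) / ((2 * j).factorial : ℝ)
    = 1 / (4 ^ j * ((Nat.factorial j : ℝ)) ^ 2) := by
  induction j with
  | zero => simp
  | succ k ih =>
    rw [Finset.prod_range_succ]
    have h1 : ((2 * (k+1)).factorial : ℝ) = (2 * k + 2) * (2 * k + 1) * ((2 * k).factorial : ℝ) := by
      rw [show 2 * (k+1) = (2 * k + 1) + 1 by ring, Nat.factorial_succ, Nat.factorial_succ]
      push_cast; ring
    have h2 : (((k+1).factorial : ℕ) : ℝ) = (k + 1) * (k.factorial : ℝ) := by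
      rw [Nat.factorial_succ]; push_cast; ring
    have e : (∏ i ∈ Finset.range k, (2 * (i:ℝ) + 1) / (2 * i + 2)) =
       ((2 * k).factorial : ℝ) * (1 / (4 ^ k * ((Nat.factorial k : ℝ)) ^ 2)) := by
      rw [← ih]; field_simp
    rw [e, h1, h2]
    have := Nat.factorial_ne_zero k
    have := Nat.factorial_ne_zero (2 * k)
    field_simp
    ring

lemma J0_full (x : ℝ) : J0 x = (1 / Real.pi) * ∫ θ in (0:ℝ)..Real.pi, Real.cos (x * Real.sin θ) := by
  have key : HasSum (fun j : ℕ => ∫ θ in (0:ℝ)..Real.pi,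
      (-1 : ℝ) ^ j * (x * Real.sin θ) ^ (2 * j) / ((2 * j).factorial : ℝ))
      (∫ θ in (0:ℝ)..Real.pi, Real.cos (x * Real.sin θ)) := by
    apply intervalIntegral.hasSum_integral_of_dominated_convergence
      (fun j _ => |x| ^ (2 * j) / ((2 * j).factorial : ℝ))
    · intro n
      apply Continuous.aestronglyMeasurable
      fun_prop
    · intro n
      refine Eventually.of_forall fun t _ => ?_
      rw [norm_div, norm_mul, norm_pow, norm_pow, norm_neg, norm_one, one_pow, one_mul,
        Real.norm_natCast]
      gcongr
      rw [norm_mul, Real.norm_eq_abs, Real.norm_eq_abs]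
      exact mul_le_of_le_one_right (abs_nonneg _) (Real.abs_sin_le_one t)
    · refine Eventually.of_forall fun t _ => ?_
      have := Real.hasSum_cosh |x|
      exact this.summable
    · simp
    · refine Eventually.of_forall fun t _ => ?_
      exact Real.hasSum_cos _
  rw [← key.tsum_eq, ← tsum_mul_left]
  unfold J0
  congr 1
  ext j
  have : ∀ θ : ℝ, (-1 : ℝ) ^ j * (x * Real.sin θ) ^ (2 * j) / ((2 * j).factorial : ℝ)
     = ((-1 : ℝ) ^ j * x ^ (2 * j) / ((2 * j).factorial : ℝ)) * Real.sin θ ^ (2 * j) := by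
    intro θ; rw [mul_pow]; ring
  simp_rw [this]
  rw [intervalIntegral.integral_const_mul, integral_sin_pow_even]
  have c := coef j
  have hpi := Real.pi_ne_zero
  have e : (1 / Real.pi) * (((-1 : ℝ) ^ j * x ^ (2 * j) / ((2 * j).factorial : ℝ)) * (Real.pi * ∏ i ∈ Finset.range j, (2 * (i:ℝ) + 1) / (2 * i + 2)))
     = (-1 : ℝ) ^ j * x ^ (2 * j) * ((∏ i ∈ Finset.range j, (2 * (i:ℝ) + 1) / (2 * i + 2)) / ((2 * j).factorial : ℝ)) := by
    field_simp
  rw [e, c, div_pow, pow_mul 2 2 j]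
  have := Nat.factorial_ne_zero j
  norm_num
  field_simp

lemma J0_half (x : ℝ) : J0 x = (2 / Real.pi) * ∫ θ in (0:ℝ)..(Real.pi / 2), Real.cos (x * Real.sin θ) := by
  have hc : Continuous fun θ : ℝ => Real.cos (x * Real.sin θ) := by fun_prop
  rw [J0_full, ← intervalIntegral.integral_add_adjacent_intervals (b := Real.pi / 2)
    (hc.intervalIntegrable _ _) (hc.intervalIntegrable _ _)]
  have : ∫ θ in (Real.pi/2)..Real.pi, Real.cos (x * Real.sin θ) =
      ∫ θ in (0:ℝ)..(Real.pi / 2), Real.cos (x * Real.sin θ) := by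
    have h := intervalIntegral.integral_comp_sub_left (a := 0) (b := Real.pi/2)
      (fun θ : ℝ => Real.cos (x * Real.sin θ)) Real.pi
    simp only [Real.sin_pi_sub, sub_zero] at h
    rw [h]; congr 1; ring
  rw [this]; ring

lemma J0_cont : Continuous J0 := by
  have : J0 = fun x => (2 / Real.pi) * ∫ θ in (0:ℝ)..(Real.pi / 2), Real.cos (x * Real.sin θ) := by
    ext x; exact J0_half x
  rw [this]
  apply Continuous.mul continuous_const
  apply intervalIntegral.continuous_parametric_intervalIntegral_of_continuous' (f := fun x θ : ℝ => Real.cos (x * Real.sin θ))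
  fun_prop

/-- the integrand -/
noncomputable def f (x : ℝ) (t : ℂ) : ℂ :=
  Complex.exp (Complex.I * x * t) * ((1 - t) ^ (-(1/2) : ℂ) * (1 + t) ^ (-(1/2) : ℂ))

lemma cpow_polar (ρ α : ℝ) (hρ : 0 < ρ) (h1 : -Real.pi < α) (h2 : α ≤ Real.pi) :
    ((ρ : ℂ) * Complex.exp (α * Complex.I)) ^ (-(1/2) : ℂ) =
      ((ρ ^ (-(1/2) : ℝ) : ℝ) : ℂ) * Complex.exp (((-(α / 2) : ℝ) : ℂ) * Complex.I) := by
  have hne : ((ρ : ℂ) * Complex.exp (α * Complex.I)) ≠ 0 :=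
    mul_ne_zero (by exact_mod_cast hρ.ne') (Complex.exp_ne_zero _)
  have e : ((ρ : ℂ) * Complex.exp (α * Complex.I)) = Complex.exp ((Real.log ρ : ℝ) + α * Complex.I) := by
    rw [Complex.exp_add, ← Complex.ofReal_exp, Real.exp_log hρ]
  rw [Complex.cpow_def_of_ne_zero hne, e, Complex.log_exp (by simpa using h1) (by simpa using h2),
    Real.rpow_def_of_pos hρ, Complex.ofReal_exp, ← Complex.exp_add]
  congr 1
  push_cast
  ring

lemma f_diff (x : ℝ) (t : ℂ) (h0 : -1 < t.re) (h1 : t.re < 1 ∨ t.im ≠ 0) : DifferentiableAt ℂ (f x) t := by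
  unfold f
  have a1 : 1 - t ∈ Complex.slitPlane := by
    rw [Complex.mem_slitPlane_iff]
    rcases h1 with h | h
    · left; simp; linarith
    · right; simpa using h
  have a2 : 1 + t ∈ Complex.slitPlane := by
    rw [Complex.mem_slitPlane_iff]
    left; simp; linarith
  apply DifferentiableAt.mul
  · fun_prop
  · apply DifferentiableAt.mul
    · exact DifferentiableAt.cpow_const (by fun_prop) a1
    · exact DifferentiableAt.cpow_const (by fun_prop) a2

lemma norm_half (w : ℂ) : ‖w ^ (-(1/2) : ℂ)‖ = ‖w‖ ^ (-(1/2) : ℝ) := by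
  have := Complex.norm_cpow_real w (-(1/2))
  push_cast at this
  exact this

lemma f_norm (x : ℝ) (a y : ℝ) (ha : 0 ≤ a) (hy : 0 < y) :
    ‖f x (a + y * Complex.I)‖ ≤ Real.exp (-(x * y)) * y ^ (-(1/2) : ℝ) := by
  unfold f
  rw [norm_mul, norm_mul, Complex.norm_exp, norm_half, norm_half]
  · have e1 : (Complex.I * x * (a + y * Complex.I)).re = -(x * y) := by simp
    rw [e1]
    gcongr
    have n1 : y ≤ ‖(1 - (a + y * Complex.I) : ℂ)‖ := by
      have := Complex.abs_im_le_norm (1 - (a + y * Complex.I) : ℂ)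
      simp at this
      rwa [abs_of_pos hy] at this
    have n2 : 1 ≤ ‖(1 + (a + y * Complex.I) : ℂ)‖ := by
      have := Complex.re_le_norm (1 + (a + y * Complex.I) : ℂ)
      simp at this
      linarith
    have m1 := Real.rpow_le_rpow_of_nonpos hy n1 (by norm_num : (-(1/2):ℝ) ≤ 0)
    have m2 := Real.rpow_le_one_of_one_le_of_nonpos n2 (by norm_num : (-(1/2):ℝ) ≤ 0)
    calc _ ≤ y ^ (-(1/2) : ℝ) * 1 := by gcongr
      _ = _ := mul_one _

end BZ

namespace BZ

/-- phase -/
noncomputable def psi (v : ℝ) : ℝ := Real.arctan (v / 2) / 2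

/-- positive kernel -/
noncomputable def K (x v : ℝ) : ℝ :=
  Real.exp (-(x * v)) * v ^ (-(1/2) : ℝ) * (4 + v ^ 2) ^ (-(1/4) : ℝ)

lemma polar2 (y : ℝ) : (2 + y * Complex.I : ℂ) =
    ((Real.sqrt (4 + y ^ 2) : ℝ) : ℂ) * Complex.exp ((Real.arctan (y / 2) : ℝ) * Complex.I) := by
  rw [Complex.exp_mul_I, ← Complex.ofReal_cos, ← Complex.ofReal_sin, Real.cos_arctan, Real.sin_arctan]
  have h : Real.sqrt (4 + y ^ 2) = 2 * Real.sqrt (1 + (y / 2) ^ 2) := by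
    rw [show 4 + y ^ 2 = 2 ^ 2 * (1 + (y / 2) ^ 2) by ring, Real.sqrt_mul (by positivity),
      Real.sqrt_sq (by norm_num)]
  have hp : (0:ℝ) < Real.sqrt (1 + (y / 2) ^ 2) := by positivity
  rw [h]
  apply Complex.ext
  · simp only [Complex.add_re, Complex.mul_re, Complex.ofReal_re, Complex.ofReal_im, Complex.I_re, Complex.I_im, Complex.add_im, Complex.mul_im]
    simp; field_simp
  · simp only [Complex.add_re, Complex.mul_re, Complex.ofReal_re, Complex.ofReal_im, Complex.I_re, Complex.I_im, Complex.add_im, Complex.mul_im]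
    simp; field_simp

lemma f_one (x y : ℝ) (hy : 0 < y) :
    (f x (1 + y * Complex.I)).im = K x y * Real.cos (x - Real.pi / 4 - psi y) := by
  have hpi := Real.pi_pos
  have e1 : (1 - (1 + y * Complex.I) : ℂ) = (y : ℂ) * Complex.exp (((-(Real.pi / 2) : ℝ) : ℂ) * Complex.I) := by
    rw [Complex.exp_mul_I, ← Complex.ofReal_cos, ← Complex.ofReal_sin, Real.cos_neg, Real.sin_neg,
      Real.cos_pi_div_two, Real.sin_pi_div_two]
    push_cast; ring
  have e2 : (1 + (1 + y * Complex.I) : ℂ) = 2 + y * Complex.I := by ring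
  unfold f
  rw [e1, e2, polar2, cpow_polar _ _ hy (by linarith) (by linarith),
    cpow_polar _ _ (by positivity) (by have := Real.neg_pi_div_two_lt_arctan (y/2); linarith)
     (by have := Real.arctan_lt_pi_div_two (y/2); linarith)]
  have e3 : Complex.exp (Complex.I * x * (1 + y * Complex.I)) =
      ((Real.exp (-(x * y)) : ℝ) : ℂ) * Complex.exp ((x : ℂ) * Complex.I) := by
    rw [Complex.ofReal_exp, ← Complex.exp_add]
    congr 1
    push_cast
    linear_combination (x * y : ℂ) * Complex.I_sq
  have e4 : Real.sqrt (4 + y ^ 2) ^ (-(1/2) : ℝ) = (4 + y ^ 2) ^ (-(1/4) : ℝ) := by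
    rw [Real.sqrt_eq_rpow, ← Real.rpow_mul (by positivity)]; norm_num
  rw [e3, e4]
  have e5 : ((Real.exp (-(x * y)) : ℝ) : ℂ) * Complex.exp ((x : ℂ) * Complex.I) *
      (((y ^ (-(1/2) : ℝ) : ℝ) : ℂ) * Complex.exp (((-(-(Real.pi/2) / 2) : ℝ) : ℂ) * Complex.I) *
      ((((4 + y ^ 2) ^ (-(1/4) : ℝ) : ℝ) : ℂ) * Complex.exp (((-(Real.arctan (y/2) / 2) : ℝ) : ℂ) * Complex.I)))
      = ((K x y : ℝ) : ℂ) * Complex.exp (((x + Real.pi / 4 - psi y : ℝ) : ℂ) * Complex.I) := by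
    have : Complex.exp (((x + Real.pi / 4 - psi y : ℝ) : ℂ) * Complex.I) =
      Complex.exp ((x : ℂ) * Complex.I) * Complex.exp (((-(-(Real.pi/2) / 2) : ℝ) : ℂ) * Complex.I) * Complex.exp (((-(Real.arctan (y/2) / 2) : ℝ) : ℂ) * Complex.I) := by
      rw [← Complex.exp_add, ← Complex.exp_add]
      congr 1
      unfold psi
      push_cast; ring
    rw [this]; unfold K; push_cast; ring
  rw [e5, Complex.im_ofReal_mul, Complex.exp_ofReal_mul_I_im]
  congr 1
  rw [← Real.cos_pi_div_two_sub, ← Real.cos_neg]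
  congr 1
  ring

lemma f_real (x t : ℝ) (h0 : 0 ≤ t) (h1 : t < 1) :
    (f x t).re = Real.cos (x * t) / Real.sqrt (1 - t ^ 2) := by
  unfold f
  have e1 : ((1 - t : ℂ)) ^ (-(1/2) : ℂ) = (((1 - t) ^ (-(1/2) : ℝ) : ℝ) : ℂ) := by
    rw [Complex.ofReal_cpow (by linarith)]; push_cast; rfl
  have e2 : ((1 + t : ℂ)) ^ (-(1/2) : ℂ) = (((1 + t) ^ (-(1/2) : ℝ) : ℝ) : ℂ) := by
    rw [Complex.ofReal_cpow (by linarith)]; push_cast; rfl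
  rw [e1, e2, ← Complex.ofReal_mul, ← Real.mul_rpow (by linarith) (by linarith),
    show Complex.I * x * t = ((x * t : ℝ) : ℂ) * Complex.I by push_cast; ring,
    Complex.re_mul_ofReal, Complex.exp_ofReal_mul_I_re, Real.rpow_neg (by nlinarith), ← Real.sqrt_eq_rpow,
    show (1 - t) * (1 + t) = 1 - t ^ 2 by ring]
  rfl

lemma f_imag (x y : ℝ) : (f x (y * Complex.I)).im = 0 := by
  rw [← Complex.conj_eq_iff_im]
  unfold f
  have n1 : (1 - y * Complex.I : ℂ).arg ≠ Real.pi := by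
    intro h; rw [Complex.arg_eq_pi_iff] at h; simp at h; linarith [h.1]
  have n2 : (1 + y * Complex.I : ℂ).arg ≠ Real.pi := by
    intro h; rw [Complex.arg_eq_pi_iff] at h; simp at h; linarith [h.1]
  have c : (starRingEnd ℂ) (-(1/2) : ℂ) = (-(1/2) : ℂ) := by
    simp only [map_neg, map_div₀, map_one, map_ofNat]
  have d1 := Complex.conj_cpow _ (-(1/2) : ℂ) n1
  have d2 := Complex.conj_cpow _ (-(1/2) : ℂ) n2
  rw [c] at d1 d2
  have g1 : (starRingEnd ℂ) (1 - y * Complex.I : ℂ) = 1 + y * Complex.I := by simp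
  have g2 : (starRingEnd ℂ) (1 + y * Complex.I : ℂ) = 1 - y * Complex.I := by simp [sub_eq_add_neg]
  rw [g1] at d1
  rw [g2] at d2
  rw [map_mul, map_mul, ← d1, ← d2, ← Complex.exp_conj]
  have g3 : (starRingEnd ℂ) (Complex.I * x * (y * Complex.I)) = Complex.I * x * (y * Complex.I) := by
    simp
  rw [g3]
  ring


lemma rect (x : ℝ) (r T : ℝ) (hr0 : 0 < r) (hr1 : r < 1) (hT : 1 ≤ T) :
    |(∫ t in (0:ℝ)..r, (f x t).re) - ∫ y in (0:ℝ)..T, (f x (r + y * Complex.I)).im| ≤ Real.exp (-(x * T)) := by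
  have hT0 : 0 < T := by linarith
  have hd : ∀ t : ℂ, 0 ≤ t.re → t.re ≤ r → DifferentiableAt ℂ (f x) t := fun t h h' =>
    f_diff x t (by linarith) (Or.inl (by linarith))
  have H := Complex.integral_boundary_rect_eq_zero_of_differentiableOn (f x) 0 (r + T * Complex.I) (by
    intro t ht
    apply DifferentiableAt.differentiableWithinAt
    rw [Complex.mem_reProdIm] at ht
    have h1 := ht.1
    simp only [Complex.zero_re, Complex.add_re, Complex.ofReal_re, Complex.mul_re, Complex.I_re,
      Complex.I_im, Complex.ofReal_im, mul_zero, zero_mul, sub_zero, add_zero] at h1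
    rw [uIcc_of_le hr0.le] at h1
    exact hd t h1.1 h1.2)
  simp only [Complex.zero_re, Complex.add_re, Complex.ofReal_re, Complex.mul_re, Complex.I_re,
      Complex.I_im, Complex.ofReal_im, mul_zero, zero_mul, sub_zero, add_zero, Complex.zero_im,
      Complex.add_im, Complex.mul_im, mul_one, zero_add, Complex.ofReal_zero, smul_eq_mul] at H
  have i1 : IntervalIntegrable (fun t : ℝ => f x t) volume 0 r := by
    apply ContinuousOn.intervalIntegrable
    intro t ht
    rw [uIcc_of_le hr0.le] at ht
    apply ContinuousAt.continuousWithinAt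
    exact ContinuousAt.comp (f := fun t : ℝ => (t : ℂ)) (hd t (by simpa using ht.1) (by simpa using ht.2)).continuousAt
      (by fun_prop)
  have i2 : ∀ a : ℝ, 0 ≤ a → a ≤ r →  IntervalIntegrable (fun y : ℝ => f x (a + y * Complex.I)) volume 0 T := by
    intro a h0 h1
    apply ContinuousOn.intervalIntegrable
    intro t ht
    apply ContinuousAt.continuousWithinAt
    exact ContinuousAt.comp (f := fun t : ℝ => (a + t * Complex.I : ℂ)) (hd _ (by simpa using h0) (by simpa using h1)).continuousAt
      (by fun_prop)
  have Hre := congrArg Complex.re H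
  simp only [Complex.add_re, Complex.sub_re, Complex.mul_re, Complex.I_re, Complex.I_im, zero_mul, one_mul, zero_sub,
    Complex.zero_re] at Hre
  have r1 : (∫ t in (0:ℝ)..r, f x t).re = ∫ t in (0:ℝ)..r, (f x t).re :=
    (Complex.reCLM.intervalIntegral_comp_comm i1).symm
  have r2 : (∫ y in (0:ℝ)..T, f x (r + y * Complex.I)).im = ∫ y in (0:ℝ)..T, (f x (r + y * Complex.I)).im :=
    (Complex.imCLM.intervalIntegral_comp_comm (i2 r hr0.le le_rfl)).symm
  have r3 : (∫ y in (0:ℝ)..T, f x (y * Complex.I)).im = 0 := by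
    have i3 := i2 0 le_rfl hr0.le
    simp only [Complex.ofReal_zero, zero_add] at i3
    have := (Complex.imCLM.intervalIntegral_comp_comm i3).symm
    simp only [Complex.imCLM_apply, f_imag, intervalIntegral.integral_zero] at this
    exact this
  rw [r1, r2, r3] at Hre
  have top : ‖∫ t in (0:ℝ)..r, f x (t + T * Complex.I)‖ ≤ Real.exp (-(x * T)) * |r - 0| := by
    apply intervalIntegral.norm_integral_le_of_norm_le_const
    intro t ht
    rw [uIoc_of_le hr0.le] at ht
    refine (f_norm x t T ht.1.le hT0).trans ?_
    have m2 := Real.rpow_le_one_of_one_le_of_nonpos hT (by norm_num : (-(1/2):ℝ) ≤ 0)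
    exact mul_le_of_le_one_right (Real.exp_pos _).le m2
  have top2 := (Complex.abs_re_le_norm _).trans top
  have e : (∫ t in (0:ℝ)..r, (f x t).re) - ∫ y in (0:ℝ)..T, (f x (r + y * Complex.I)).im =
    (∫ t in (0:ℝ)..r, f x (t + T * Complex.I)).re := by linarith
  rw [e]
  refine top2.trans ?_
  apply mul_le_of_le_one_right (Real.exp_pos _).le
  rw [sub_zero, abs_of_pos hr0]; exact hr1.le

lemma bottom (x α : ℝ) (h0 : 0 < α) (h1 : α < Real.pi / 2) :
    ∫ t in (0:ℝ)..(Real.sin α), (f x t).re = ∫ θ in (0:ℝ)..α, Real.cos (x * Real.sin θ) := by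
  have hs : ∀ θ ∈ uIcc 0 α, 0 ≤ Real.sin θ ∧ Real.sin θ < 1 ∧ 0 < Real.cos θ := by
    intro θ hθ
    rw [uIcc_of_le h0.le] at hθ
    have hc : 0 < Real.cos θ := Real.cos_pos_of_mem_Ioo ⟨by linarith [hθ.1], by linarith [hθ.2]⟩
    refine ⟨Real.sin_nonneg_of_nonneg_of_le_pi hθ.1 (by linarith [hθ.2]), ?_, hc⟩
    nlinarith [Real.sin_sq_add_cos_sq θ, Real.sin_le_one θ]
  have := intervalIntegral.integral_comp_mul_deriv' (a := 0) (b := α) (f := Real.sin) (f' := Real.cos)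
    (g := fun t : ℝ => (f x t).re) (fun θ _ => Real.hasDerivAt_sin θ) (by fun_prop) (by
      rintro t ⟨θ, hθ, rfl⟩
      apply ContinuousAt.continuousWithinAt
      obtain ⟨a, b, c⟩ := hs θ hθ
      have hd := (f_diff x (Real.sin θ : ℝ) (by rw [Complex.ofReal_re]; linarith) (Or.inl (by rw [Complex.ofReal_re]; exact b))).continuousAt
      exact Complex.continuous_re.continuousAt.comp (ContinuousAt.comp (f := fun t : ℝ => (t : ℂ)) hd (by fun_prop)))
  rw [Real.sin_zero] at this
  rw [← this]
  apply intervalIntegral.integral_congr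
  intro θ hθ
  obtain ⟨a, b, c⟩ := hs θ hθ
  simp only [Function.comp]
  rw [f_real x _ a b, ← Real.abs_cos_eq_sqrt_one_sub_sin_sq, abs_of_pos c]
  field_simp

lemma lim1 (x T : ℝ) (hx : 0 < x) (hT : 1 ≤ T) :
    |(∫ θ in (0:ℝ)..(Real.pi / 2), Real.cos (x * Real.sin θ)) - ∫ y in (0:ℝ)..T, K x y * Real.cos (x - Real.pi / 4 - psi y)|
      ≤ Real.exp (-(x * T)) := by
  have hpi := Real.pi_pos
  have hT0 : (0:ℝ) < T := by linarith
  have hev : ∀ᶠ α in 𝓝[<] (Real.pi/2), 0 < α ∧ α < Real.pi / 2 := by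
    have : Ioo 0 (Real.pi/2) ∈ 𝓝[<] (Real.pi/2) := Ioo_mem_nhdsLT (by linarith)
    filter_upwards [this] with α h using h
  have hsin : ∀ α, 0 < α → α < Real.pi / 2 → 0 < Real.sin α ∧ Real.sin α < 1 := by
    intro α h0 h1
    have hc : 0 < Real.cos α := Real.cos_pos_of_mem_Ioo ⟨by linarith, by linarith⟩
    refine ⟨Real.sin_pos_of_pos_of_lt_pi h0 (by linarith), ?_⟩
    nlinarith [Real.sin_sq_add_cos_sq α, Real.sin_le_one α]
  have t1 : Tendsto (fun α : ℝ => ∫ θ in (0:ℝ)..α, Real.cos (x * Real.sin θ)) (𝓝[<] (Real.pi/2))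
      (𝓝 (∫ θ in (0:ℝ)..(Real.pi / 2), Real.cos (x * Real.sin θ))) := by
    have hc : Continuous fun θ : ℝ => Real.cos (x * Real.sin θ) := by fun_prop
    have : Continuous (fun α : ℝ => ∫ θ in (0:ℝ)..α, Real.cos (x * Real.sin θ)) :=
      intervalIntegral.continuous_primitive (fun a b => hc.intervalIntegrable a b) 0
    exact (this.tendsto _).mono_left nhdsWithin_le_nhds
  have t2 : Tendsto (fun α : ℝ => ∫ y in (0:ℝ)..T, (f x ((Real.sin α : ℝ) + y * Complex.I)).im) (𝓝[<] (Real.pi/2))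
      (𝓝 (∫ y in (0:ℝ)..T, K x y * Real.cos (x - Real.pi / 4 - psi y))) := by
    apply intervalIntegral.tendsto_integral_filter_of_dominated_convergence (fun y => y ^ (-(1/2) : ℝ))
    · filter_upwards [hev] with α hα
      obtain ⟨s0, s1⟩ := hsin α hα.1 hα.2
      apply Continuous.aestronglyMeasurable
      rw [continuous_iff_continuousAt]
      intro y
      have hd := (f_diff x ((Real.sin α : ℝ) + y * Complex.I) (by simp only [Complex.add_re, Complex.ofReal_re, Complex.mul_re, Complex.I_re, Complex.I_im, Complex.ofReal_im]; linarith)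
        (Or.inl (by simp only [Complex.add_re, Complex.ofReal_re, Complex.mul_re, Complex.I_re, Complex.I_im, Complex.ofReal_im]; linarith))).continuousAt
      exact Complex.continuous_im.continuousAt.comp (ContinuousAt.comp (f := fun y : ℝ => ((Real.sin α : ℝ) + y * Complex.I : ℂ)) hd (by fun_prop))
    · filter_upwards [hev] with α hα
      obtain ⟨s0, s1⟩ := hsin α hα.1 hα.2
      refine Eventually.of_forall fun y hy => ?_
      rw [uIoc_of_le hT0.le] at hy
      refine ((Complex.abs_im_le_norm _).trans (f_norm x _ y s0.le hy.1)).trans ?_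
      apply mul_le_of_le_one_left (Real.rpow_nonneg hy.1.le _)
      rw [Real.exp_le_one_iff]
      nlinarith [hy.1]
    · exact intervalIntegral.intervalIntegrable_rpow' (by norm_num)
    · refine Eventually.of_forall fun y hy => ?_
      rw [uIoc_of_le hT0.le] at hy
      rw [← f_one x y hy.1]
      have hd := (f_diff x (1 + y * Complex.I) (by simp) (Or.inr (by simpa using hy.1.ne'))).continuousAt
      have hc : ContinuousAt (fun α : ℝ => (f x ((Real.sin α : ℝ) + y * Complex.I)).im) (Real.pi/2) := by
        apply Complex.continuous_im.continuousAt.comp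
        apply ContinuousAt.comp (g := f x) (f := fun α : ℝ => ((Real.sin α : ℝ) + y * Complex.I : ℂ))
        · rw [Real.sin_pi_div_two]; exact_mod_cast hd
        · fun_prop
      have := hc.tendsto
      rw [Real.sin_pi_div_two, Complex.ofReal_one] at this
      exact this.mono_left nhdsWithin_le_nhds
  refine le_of_tendsto (t1.sub t2).abs ?_
  filter_upwards [hev] with α hα
  obtain ⟨s0, s1⟩ := hsin α hα.1 hα.2
  rw [← bottom x α hα.1 hα.2]
  exact rect x _ T s0 s1 hT

end BZ

namespace BZ

lemma K_pos (x v : ℝ) (hv : 0 < v) : 0 < K x v := by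
  unfold K; positivity

lemma psi_cont : Continuous psi := by
  unfold psi; fun_prop

lemma psi_pos (v : ℝ) (hv : 0 < v) : 0 < psi v := by
  have : 0 < Real.arctan (v / 2) := by rw [Real.arctan_pos]; positivity
  unfold psi; linarith

lemma psi_lt (v : ℝ) : psi v < Real.pi / 4 := by
  have := Real.arctan_lt_pi_div_two (v / 2)
  unfold psi; linarith

lemma mom_int (x : ℝ) (hx : 0 < x) (k : ℕ) :
    IntegrableOn (fun v : ℝ => Real.exp (-(x * v)) * v ^ (-(1/2) : ℝ) * v ^ k) (Ioi 0) := by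
  have h := integrableOn_rpow_mul_exp_neg_mul_rpow (p := 1) (s := -(1/2) + k) (b := x)
    (by have : (0:ℝ) ≤ k := by positivity
        linarith) (by norm_num) hx
  refine h.congr_fun ?_ measurableSet_Ioi
  intro v hv
  simp only [Real.rpow_one]
  rw [Real.rpow_add_natCast (ne_of_gt hv)]
  rw [neg_mul]; ring

lemma mom (x : ℝ) (hx : 0 < x) (k : ℕ) :
    ∫ v in Ioi (0:ℝ), Real.exp (-(x * v)) * v ^ (-(1/2) : ℝ) * v ^ k = (1 / x) ^ ((k:ℝ) + 1/2) * Real.Gamma (k + 1/2) := by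
  rw [← Real.integral_rpow_mul_exp_neg_mul_Ioi (by positivity) hx]
  apply setIntegral_congr_fun measurableSet_Ioi
  intro v hv
  simp only
  rw [show (k:ℝ) + 1/2 - 1 = -(1/2) + k by ring, Real.rpow_add_natCast (ne_of_gt hv)]
  ring

lemma K_int (x : ℝ) (hx : 0 < x) (g : ℝ → ℝ) (hg : Continuous g) (hb : ∀ v, |g v| ≤ 1) :
    IntegrableOn (fun v => K x v * g v) (Ioi 0) := by
  have h := mom_int x hx 0
  refine Integrable.mono' h ?_ ?_
  · apply ContinuousOn.aestronglyMeasurable _ measurableSet_Ioi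
    apply ContinuousOn.mul _ hg.continuousOn
    unfold K
    apply ContinuousOn.mul
    · apply ContinuousOn.mul
      · fun_prop
      · intro v hv
        exact (Real.continuousAt_rpow_const _ _ (Or.inl (ne_of_gt hv))).continuousWithinAt
    · apply ContinuousOn.rpow_const (by fun_prop)
      intro v hv; left; positivity
  · refine (ae_restrict_iff' measurableSet_Ioi).2 (Eventually.of_forall fun v hv => ?_)
    have hv : 0 < v := hv
    rw [norm_mul, Real.norm_eq_abs, Real.norm_eq_abs, abs_of_pos (K_pos x v hv), pow_zero, mul_one]
    have m2 := Real.rpow_le_one_of_one_le_of_nonpos (by nlinarith : 1 ≤ 4 + v ^ 2) (by norm_num : (-(1/4):ℝ) ≤ 0)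
    unfold K
    calc _ ≤ Real.exp (-(x * v)) * v ^ (-(1/2) : ℝ) * 1 * 1 := by
          gcongr
          exact hb v
      _ = _ := by ring

lemma rep (x : ℝ) (hx : 0 < x) :
    (Real.pi / 2) * J0 x = ∫ v in Ioi (0:ℝ), K x v * Real.cos (x - Real.pi / 4 - psi v) := by
  have hpi := Real.pi_pos
  have e : (Real.pi / 2) * J0 x = ∫ θ in (0:ℝ)..(Real.pi / 2), Real.cos (x * Real.sin θ) := by
    rw [J0_half]; field_simp
  rw [e]
  have hi := K_int x hx (fun v => Real.cos (x - Real.pi / 4 - psi v)) (by have := psi_cont; fun_prop)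
    (fun v => Real.abs_cos_le_one _)
  have t1 := intervalIntegral_tendsto_integral_Ioi 0 hi tendsto_id
  have t2 : Tendsto (fun T : ℝ => Real.exp (-(x * T))) atTop (𝓝 0) := by
    apply Real.tendsto_exp_neg_atTop_nhds_zero.comp
    exact tendsto_id.const_mul_atTop hx
  have t3 := (t1.const_sub (∫ θ in (0:ℝ)..(Real.pi / 2), Real.cos (x * Real.sin θ))).abs
  have := le_of_tendsto_of_tendsto t3 t2 (by
    filter_upwards [eventually_ge_atTop 1] with T hT
    exact lim1 x T hx hT)
  have := abs_nonpos_iff.1 this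
  linarith

lemma int_pos (x : ℝ) (hx : 0 < x) (g : ℝ → ℝ) (hg : Continuous g) (hb : ∀ v, |g v| ≤ 1)
    (hp : ∀ v, 0 < v → 0 < g v) : 0 < ∫ v in Ioi (0:ℝ), K x v * g v := by
  rw [setIntegral_pos_iff_support_of_nonneg_ae _ (K_int x hx g hg hb)]
  · have : Function.support (fun v => K x v * g v) ∩ Ioi 0 = Ioi 0 := by
      apply inter_eq_right.2
      intro v hv
      exact (mul_pos (K_pos x v hv) (hp v hv)).ne'
    rw [this]; simp
  · refine (ae_restrict_iff' measurableSet_Ioi).2 (Eventually.of_forall fun v hv => ?_)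
    exact (mul_pos (K_pos x v hv) (hp v hv)).le

/-- the sine form -/
noncomputable def S (x δ : ℝ) : ℝ := ∫ v in Ioi (0:ℝ), K x v * Real.sin (δ - psi v)

lemma repS (n : ℕ) (δ : ℝ) (hx : 0 < Real.pi * n - Real.pi / 4 + δ) :
    (Real.pi / 2) * J0 (Real.pi * n - Real.pi / 4 + δ) = (-1) ^ n * S (Real.pi * n - Real.pi / 4 + δ) δ := by
  rw [rep _ hx, S, ← integral_const_mul]
  congr 1
  ext v
  rw [show Real.pi * n - Real.pi / 4 + δ - Real.pi / 4 - psi v = (δ - psi v - Real.pi / 2) + n * Real.pi by ring,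
    Real.cos_add_nat_mul_pi, Real.cos_sub_pi_div_two]
  ring

lemma J0_zero_iff (n : ℕ) (δ : ℝ) (hx : 0 < Real.pi * n - Real.pi / 4 + δ) :
    J0 (Real.pi * n - Real.pi / 4 + δ) = 0 ↔ S (Real.pi * n - Real.pi / 4 + δ) δ = 0 := by
  have h := repS n δ hx
  have hpi := Real.pi_pos
  have h1 : ((-1:ℝ)) ^ n ≠ 0 := by simp
  constructor
  · intro h0
    rw [h0, mul_zero] at h
    exact (mul_eq_zero.1 h.symm).resolve_left h1
  · intro h0
    rw [h0, mul_zero] at h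
    exact (mul_eq_zero.1 h).resolve_left (by positivity)

lemma S_neg (x δ : ℝ) (hx : 0 < x) (h0 : -(3 * Real.pi / 4) ≤ δ) (h1 : δ ≤ 0) : S x δ < 0 := by
  have := int_pos x hx (fun v => - Real.sin (δ - psi v)) (by have := psi_cont; fun_prop)
    (fun v => by rw [abs_neg]; exact Real.abs_sin_le_one _) (by
      intro v hv
      have := psi_pos v hv
      have := psi_lt v
      have := Real.sin_neg_of_neg_of_neg_pi_lt (x := δ - psi v) (by linarith) (by linarith)
      linarith)
  simp only [mul_neg] at this
  rw [integral_neg] at this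
  unfold S; linarith

lemma S_pos (x : ℝ) (hx : 0 < x) : 0 < S x (Real.pi / 4) := by
  apply int_pos x hx (fun v => Real.sin (Real.pi / 4 - psi v)) (by have := psi_cont; fun_prop)
    (fun v => Real.abs_sin_le_one _)
  intro v hv
  have := psi_pos v hv
  have := psi_lt v
  exact Real.sin_pos_of_pos_of_lt_pi (by linarith) (by linarith [Real.pi_pos])

lemma S_strict (x y δ ε : ℝ) (hx : 0 < x) (hxy : x < y) (h0 : 0 < δ) (hδ : δ < ε) (hε : ε < Real.pi / 4)
    (hz : S x δ = 0) : 0 < S y ε := by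
  have hpi := Real.pi_pos
  have hc := psi_cont
  set v0 := 2 * Real.tan (2 * δ) with hv0
  have hψ0 : psi v0 = δ := by
    unfold psi
    rw [hv0, mul_div_cancel_left₀ _ (by norm_num), Real.arctan_tan (by linarith) (by linarith)]
    ring
  have hmono : ∀ a b, a ≤ b → psi a ≤ psi b := by
    intro a b hab
    unfold psi
    have := Real.arctan_strictMono.monotone (show a / 2 ≤ b / 2 by linarith)
    linarith
  have i1 : ∀ x, 0 < x → ∀ δ, IntegrableOn (fun v => K x v * Real.sin (δ - psi v)) (Ioi 0) := fun x hx δ =>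
    K_int x hx _ (by fun_prop) (fun v => Real.abs_sin_le_one _)
  have hy : 0 < y := by linarith
  have step1 : 0 ≤ S y δ := by
    have h : ∫ v in Ioi (0:ℝ), Real.exp (-((y - x) * v0)) * (K x v * Real.sin (δ - psi v)) ≤ S y δ := by
      apply setIntegral_mono_on ((i1 x hx δ).const_mul _) (i1 y hy δ) measurableSet_Ioi
      intro v hv
      have hv : 0 < v := hv
      have hK : K y v = Real.exp (-((y - x) * v)) * K x v := by
        unfold K
        rw [show -(y * v) = -((y - x) * v) + -(x * v) by ring, Real.exp_add]; ring
      rw [hK, mul_assoc]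
      have p1 := psi_pos v hv
      have p2 := psi_lt v
      rcases le_total v v0 with h | h
      · have hs : 0 ≤ Real.sin (δ - psi v) := by
          have := hmono _ _ h
          apply Real.sin_nonneg_of_nonneg_of_le_pi <;> linarith
        have := mul_nonneg (K_pos x v hv).le hs
        apply mul_le_mul_of_nonneg_right _ this
        apply Real.exp_le_exp.2
        nlinarith
      · have hs : Real.sin (δ - psi v) ≤ 0 := by
          have := hmono _ _ h
          apply Real.sin_nonpos_of_nonpos_of_neg_pi_le <;> linarith
        have := mul_nonpos_of_nonneg_of_nonpos (K_pos x v hv).le hs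
        apply mul_le_mul_of_nonpos_right _ this
        apply Real.exp_le_exp.2
        nlinarith
    rw [integral_const_mul] at h
    have h2 : ∫ v in Ioi (0:ℝ), K x v * Real.sin (δ - psi v) = 0 := hz
    rw [h2, mul_zero] at h
    exact h
  have step2 := int_pos y hy (fun v => (Real.sin (ε - psi v) - Real.sin (δ - psi v)) / 2) (by fun_prop)
    (fun v => by
      have a1 := abs_le.1 (Real.abs_sin_le_one (ε - psi v))
      have a2 := abs_le.1 (Real.abs_sin_le_one (δ - psi v))
      rw [abs_le]
      constructor <;> linarith [a1.1, a1.2, a2.1, a2.2]) (by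
      intro v hv
      have p1 := psi_pos v hv
      have p2 := psi_lt v
      have := Real.sin_lt_sin_of_lt_of_le_pi_div_two (x := δ - psi v) (y := ε - psi v) (by linarith) (by linarith) (by linarith)
      linarith)
  have e : ∫ v in Ioi (0:ℝ), K y v * ((Real.sin (ε - psi v) - Real.sin (δ - psi v)) / 2) = (S y ε - S y δ) / 2 := by
    unfold S
    rw [← integral_sub (i1 y hy ε) (i1 y hy δ), ← integral_div]
    congr 1
    ext v; ring
  rw [e] at step2
  linarith

end BZ

namespace BZ

lemma ab_facts (v : ℝ) (hv : 0 < v) :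
    ∃ a b : ℝ, (4 + v ^ 2) ^ (-(1/4) : ℝ) * Real.cos (psi v) = a ∧ (4 + v ^ 2) ^ (-(1/4) : ℝ) * Real.sin (psi v) = b ∧
     0 < a ∧ 0 < b ∧ a ^ 2 - b ^ 2 = 2 / (4 + v ^ 2) ∧ 2 * a * b = v / (4 + v ^ 2) ∧ a ^ 2 + b ^ 2 ≤ 1 / 2 := by
  refine ⟨_, _, rfl, rfl, ?_⟩
  have hpi := Real.pi_pos
  have p1 := psi_pos v hv
  have p2 := psi_lt v
  have hc : 0 < Real.cos (psi v) := Real.cos_pos_of_mem_Ioo ⟨by linarith, by linarith⟩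
  have hs : 0 < Real.sin (psi v) := Real.sin_pos_of_pos_of_lt_pi p1 (by linarith)
  have hq : 0 < 4 + v ^ 2 := by positivity
  set s := (4 + v ^ 2) ^ (-(1/4) : ℝ) with hsdef
  have hs0 : 0 < s := by positivity
  have hs2 : s ^ 2 = 1 / Real.sqrt (4 + v ^ 2) := by
    rw [hsdef, ← Real.rpow_natCast, ← Real.rpow_mul hq.le, Real.sqrt_eq_rpow, one_div (((4:ℝ) + v ^ 2) ^ (1 / 2 : ℝ)), ← Real.rpow_neg hq.le]
    norm_num
  have h : Real.sqrt (4 + v ^ 2) = 2 * Real.sqrt (1 + (v / 2) ^ 2) := by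
    rw [show 4 + v ^ 2 = 2 ^ 2 * (1 + (v / 2) ^ 2) by ring, Real.sqrt_mul (by positivity),
      Real.sqrt_sq (by norm_num)]
  have hR : Real.sqrt (4 + v ^ 2) ^ 2 = 4 + v ^ 2 := Real.sq_sqrt hq.le
  have hR0 : 0 < Real.sqrt (4 + v ^ 2) := by positivity
  set R := Real.sqrt (4 + v ^ 2)
  have hR' : Real.sqrt (1 + (v / 2) ^ 2) = R / 2 := by linarith
  have c2 : Real.cos (2 * psi v) = 2 / R := by
    rw [show 2 * psi v = Real.arctan (v / 2) by unfold psi; ring, Real.cos_arctan, hR']; field_simp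
  have s2 : Real.sin (2 * psi v) = v / R := by
    rw [show 2 * psi v = Real.arctan (v / 2) by unfold psi; ring, Real.sin_arctan, hR']; field_simp
  rw [Real.cos_two_mul'] at c2
  rw [Real.sin_two_mul] at s2
  refine ⟨by positivity, by positivity, ?_, ?_, ?_⟩
  · rw [mul_pow, mul_pow, ← mul_sub, c2, hs2, ← hR]; field_simp
  · rw [show 2 * (s * Real.cos (psi v)) * (s * Real.sin (psi v)) = s ^ 2 * (2 * Real.sin (psi v) * Real.cos (psi v)) by ring,
      s2, hs2, ← hR]; field_simp
  · rw [mul_pow, mul_pow, ← mul_add, Real.cos_sq_add_sin_sq, hs2, mul_one]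
    apply one_div_le_one_div_of_le (by norm_num)
    nlinarith

lemma ab_bounds (v a b : ℝ) (hv : 0 < v) (ha : 0 < a) (hb : 0 < b)
    (h1 : a ^ 2 - b ^ 2 = 2 / (4 + v ^ 2)) (h2 : 2 * a * b = v / (4 + v ^ 2)) (h3 : a ^ 2 + b ^ 2 ≤ 1 / 2) :
    Real.sqrt 2 * a ≤ 1 ∧ 1 - v ^ 2 / 4 ≤ Real.sqrt 2 * a ∧ Real.sqrt 2 * b ≤ v / 4 ∧
      v / 4 - v ^ 3 / 16 ≤ Real.sqrt 2 * b := by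
  have hr : Real.sqrt 2 ^ 2 = 2 := Real.sq_sqrt (by norm_num)
  have hr0 : 0 < Real.sqrt 2 := by positivity
  set p := Real.sqrt 2 * a with hp
  set q := Real.sqrt 2 * b with hq
  have hp0 : 0 < p := by positivity
  have hq0 : 0 < q := by positivity
  have g1 : (p ^ 2 - q ^ 2) * (4 + v ^ 2) = 4 := by
    rw [hp, hq, mul_pow, mul_pow, ← mul_sub, h1, hr]; field_simp; norm_num
  have g2 : p * q * (4 + v ^ 2) = v := by
    have : p * q = 2 * a * b := by rw [hp, hq]; linear_combination (a * b) * hr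
    rw [this, h2]; field_simp
  have g3 : p ^ 2 + q ^ 2 ≤ 1 := by
    rw [hp, hq, mul_pow, mul_pow, hr]; linarith
  have k1 : p ≤ 1 := by nlinarith
  have k2 : 1 - v ^ 2 / 4 ≤ p := by
    have : 1 - v ^ 2 / 4 ≤ p ^ 2 := by
      have : 4 ≤ p ^ 2 * (4 + v ^ 2) := by nlinarith [mul_nonneg (sq_nonneg q) (sq_nonneg v), sq_nonneg q]
      nlinarith [sq_nonneg v, mul_le_mul_of_nonneg_right k1 (sq_nonneg v), mul_nonneg (sq_nonneg v) (sub_nonneg.2 k1)]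
    nlinarith
  have k4 : v / 4 - v ^ 3 / 16 ≤ q := by
    have : v ≤ q * (4 + v ^ 2) := by
      have : 0 < q * (4 + v ^ 2) := by positivity
      nlinarith
    have : v / (4 + v ^ 2) ≤ q := by rw [div_le_iff₀ (by positivity)]; exact this
    refine le_trans ?_ this
    rw [le_div_iff₀ (by positivity)]
    have : 0 < v ^ 5 := by positivity
    nlinarith
  have k3 : q ≤ v / 4 := by
    by_contra hcon
    push Not at hcon
    have e1 : 4 ≤ p ^ 2 * (4 + v ^ 2) := by nlinarith [mul_nonneg (sq_nonneg q) (sq_nonneg v), sq_nonneg q]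
    have e2 : p ^ 2 * q ^ 2 * (4 + v ^ 2) ^ 2 = v ^ 2 := by
      have := congrArg (fun t => t ^ 2) g2
      linear_combination this
    have e3 : 4 * q ^ 2 * (4 + v ^ 2) ≤ v ^ 2 := by
      have := mul_le_mul_of_nonneg_right e1 (show 0 ≤ q ^ 2 * (4 + v ^ 2) by positivity)
      linarith
    have e4 : v ^ 2 / 16 < q ^ 2 := by nlinarith
    have := mul_nonneg (sq_nonneg q) (sq_nonneg v)
    nlinarith
  exact ⟨k1, k2, k3, k4⟩

lemma mom_rec (x : ℝ) (hx : 0 < x) : ∃ c : ℝ, 0 < c ∧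
    (∫ v in Ioi (0:ℝ), Real.exp (-(x * v)) * v ^ (-(1/2) : ℝ) * v ^ 0 = c) ∧
    (∫ v in Ioi (0:ℝ), Real.exp (-(x * v)) * v ^ (-(1/2) : ℝ) * v ^ 1 = c / (2 * x)) ∧
    (∫ v in Ioi (0:ℝ), Real.exp (-(x * v)) * v ^ (-(1/2) : ℝ) * v ^ 2 = 3 * c / (4 * x ^ 2)) ∧
    (∫ v in Ioi (0:ℝ), Real.exp (-(x * v)) * v ^ (-(1/2) : ℝ) * v ^ 3 = 15 * c / (8 * x ^ 3)) := by
  have hx' : 0 < 1 / x := by positivity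
  refine ⟨(1 / x) ^ ((1/2 : ℝ)) * Real.Gamma (1/2), ?_, ?_, ?_, ?_, ?_⟩
  · have := Real.Gamma_pos_of_pos (show (0:ℝ) < 1/2 by norm_num)
    positivity
  · rw [mom x hx]; norm_num
  all_goals
    have G1 : Real.Gamma (1 + 1/2) = 1/2 * Real.Gamma (1/2) := by
      rw [← Real.Gamma_add_one (by norm_num)]; norm_num
    have G2 : Real.Gamma (2 + 1/2) = 3/4 * Real.Gamma (1/2) := by
      have := Real.Gamma_add_one (s := 1 + 1/2) (by norm_num)
      rw [G1] at this
      rw [show (2:ℝ) + 1/2 = 1 + 1/2 + 1 by norm_num, this]; ring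
    have G3 : Real.Gamma (3 + 1/2) = 15/8 * Real.Gamma (1/2) := by
      have := Real.Gamma_add_one (s := 2 + 1/2) (by norm_num)
      rw [G2] at this
      rw [show (3:ℝ) + 1/2 = 2 + 1/2 + 1 by norm_num, this]; ring
    rw [mom x hx, Real.rpow_add hx', Real.rpow_natCast]
    push_cast
    first | rw [G1] | rw [G2] | rw [G3]
    field_simp

lemma AB (x : ℝ) (hx : 0 < x) : ∃ A B c : ℝ, 0 < c ∧ A ≤ c ∧ c - 3 * c / (16 * x ^ 2) ≤ A ∧
    B ≤ c / (8 * x) ∧ c / (8 * x) - 15 * c / (128 * x ^ 3) ≤ B ∧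
    ∀ δ, Real.sqrt 2 * S x δ = Real.sin δ * A - Real.cos δ * B := by
  have hc := psi_cont
  obtain ⟨c, hc0, m0, m1, m2, m3⟩ := mom_rec x hx
  have j0 := mom_int x hx 0
  have j1 := mom_int x hx 1
  have j2 := mom_int x hx 2
  have j3 := mom_int x hx 3
  have iA : IntegrableOn (fun v => K x v * Real.cos (psi v)) (Ioi 0) := K_int x hx _ (by fun_prop) (fun v => Real.abs_cos_le_one _)
  have iB : IntegrableOn (fun v => K x v * Real.sin (psi v)) (Ioi 0) := K_int x hx _ (by fun_prop) (fun v => Real.abs_sin_le_one _)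
  have main : ∀ v, 0 < v → ∃ w p q : ℝ, 0 ≤ w ∧ w = Real.exp (-(x * v)) * v ^ (-(1/2) : ℝ) ∧
      Real.sqrt 2 * (K x v * Real.cos (psi v)) = w * p ∧ Real.sqrt 2 * (K x v * Real.sin (psi v)) = w * q ∧
      p ≤ 1 ∧ 1 - v ^ 2 / 4 ≤ p ∧ q ≤ v / 4 ∧ v / 4 - v ^ 3 / 16 ≤ q := by
    intro v hv
    obtain ⟨a, b, ea, eb, ha, hb, h1, h2, h3⟩ := ab_facts v hv
    obtain ⟨k1, k2, k3, k4⟩ := ab_bounds v a b hv ha hb h1 h2 h3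
    refine ⟨_, Real.sqrt 2 * a, Real.sqrt 2 * b, by positivity, rfl, ?_, ?_, k1, k2, k3, k4⟩
    · rw [← ea]; unfold K; ring
    · rw [← eb]; unfold K; ring
  refine ⟨∫ v in Ioi (0:ℝ), Real.sqrt 2 * (K x v * Real.cos (psi v)), ∫ v in Ioi (0:ℝ), Real.sqrt 2 * (K x v * Real.sin (psi v)), c, hc0, ?_, ?_, ?_, ?_, ?_⟩
  · rw [← m0]
    apply setIntegral_mono_on (iA.const_mul _) j0 measurableSet_Ioi
    intro v hv
    obtain ⟨w, p, q, hw, e, ep, eq, k1, k2, k3, k4⟩ := main v hv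
    rw [ep, ← e]; nlinarith
  · have e : c - 3 * c / (16 * x ^ 2) = ∫ v in Ioi (0:ℝ), (Real.exp (-(x * v)) * v ^ (-(1/2) : ℝ) * v ^ 0 - (1/4) * (Real.exp (-(x * v)) * v ^ (-(1/2) : ℝ) * v ^ 2)) := by
      rw [integral_sub j0 (j2.const_mul _), integral_const_mul, m0, m2]; ring
    rw [e]
    apply setIntegral_mono_on (j0.sub (j2.const_mul _)) (iA.const_mul _) measurableSet_Ioi
    intro v hv
    obtain ⟨w, p, q, hw, e, ep, eq, k1, k2, k3, k4⟩ := main v hv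
    simp only [Pi.sub_apply]
    rw [ep, ← e]
    nlinarith [mul_le_mul_of_nonneg_left k2 hw]
  · have e : c / (8 * x) = ∫ v in Ioi (0:ℝ), (1/4) * (Real.exp (-(x * v)) * v ^ (-(1/2) : ℝ) * v ^ 1) := by
      rw [integral_const_mul, m1]; field_simp; norm_num
    rw [e]
    apply setIntegral_mono_on (iB.const_mul _) (j1.const_mul _) measurableSet_Ioi
    intro v hv
    obtain ⟨w, p, q, hw, e, ep, eq, k1, k2, k3, k4⟩ := main v hv
    rw [eq, ← e]; nlinarith [mul_le_mul_of_nonneg_left k3 hw]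
  · have e : c / (8 * x) - 15 * c / (128 * x ^ 3) = ∫ v in Ioi (0:ℝ), ((1/4) * (Real.exp (-(x * v)) * v ^ (-(1/2) : ℝ) * v ^ 1) - (1/16) * (Real.exp (-(x * v)) * v ^ (-(1/2) : ℝ) * v ^ 3)) := by
      rw [integral_sub (j1.const_mul _) (j3.const_mul _), integral_const_mul, integral_const_mul, m1, m3]; field_simp; ring
    rw [e]
    apply setIntegral_mono_on ((j1.const_mul _).sub (j3.const_mul _)) (iB.const_mul _) measurableSet_Ioi
    intro v hv
    obtain ⟨w, p, q, hw, e, ep, eq, k1, k2, k3, k4⟩ := main v hv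
    simp only [Pi.sub_apply]
    rw [eq, ← e]
    nlinarith [mul_le_mul_of_nonneg_left k4 hw]
  · intro δ
    unfold S
    rw [← integral_const_mul, ← integral_const_mul, ← integral_const_mul, ← integral_sub ((iA.const_mul _).const_mul _) ((iB.const_mul _).const_mul _)]
    congr 1
    ext v
    rw [Real.sin_sub]; ring

lemma asym (x δ : ℝ) (hx : 2 ≤ x) (h0 : 0 < δ) (h1 : δ < Real.pi / 4) (hS : S x δ = 0) :
    |δ - 1 / (8 * x)| ≤ 1 / x ^ 2 := by
  obtain ⟨A, B, c, hc, a1, a2, b1, b2, h⟩ := AB x (by linarith)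
  have hh := h δ
  rw [hS, mul_zero] at hh
  have hpi := Real.pi_pos
  have hcos : 0 < Real.cos δ := Real.cos_pos_of_mem_Ioo ⟨by linarith, by linarith⟩
  have hsin : 0 < Real.sin δ := Real.sin_pos_of_pos_of_lt_pi h0 (by linarith)
  set u := 1 / x with hu
  have hu0 : 0 < u := by positivity
  have hu1 : u ≤ 1 / 2 := by rw [hu]; exact one_div_le_one_div_of_le (by norm_num) hx
  have f1 : 3 * c / (16 * x ^ 2) = c * (3 * u ^ 2 / 16) := by rw [hu]; field_simp
  have f2 : c / (8 * x) = c * (u / 8) := by rw [hu]; field_simp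
  have f3 : 15 * c / (128 * x ^ 3) = c * (15 * u ^ 3 / 128) := by rw [hu]; field_simp
  have f4 : 1 / (8 * x) = u / 8 := by rw [hu]; field_simp
  have f5 : 1 / x ^ 2 = u ^ 2 := by rw [hu]; field_simp
  rw [f1] at a2
  rw [f2] at b1
  rw [f2, f3] at b2
  rw [f4, f5]
  have hu2 : u ^ 2 ≤ 1 / 4 := by nlinarith
  have hA : 0 < A := by nlinarith [mul_le_mul_of_nonneg_left hu2 hc.le]
  -- upper bound
  have up : δ ≤ u / 8 * (1 + 3 * u ^ 2 / 8) := by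
    have t := Real.lt_tan h0 (by linarith)
    have : Real.tan δ = B / A := by
      rw [Real.tan_eq_sin_div_cos, div_eq_div_iff hcos.ne' hA.ne']; linarith
    rw [this] at t
    refine t.le.trans ?_
    rw [div_le_iff₀ hA]
    refine b1.trans ?_
    have : c * (u / 8) ≤ u / 8 * (1 + 3 * u ^ 2 / 8) * (c - c * (3 * u ^ 2 / 16)) := by
      have : u / 8 * (1 + 3 * u ^ 2 / 8) * (c - c * (3 * u ^ 2 / 16)) - c * (u / 8) =
        c * (u / 8) * (3 * u ^ 2 / 16) * (1 - 3 * u ^ 2 / 8) := by ring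
      have h' : 0 ≤ 1 - 3 * u ^ 2 / 8 := by nlinarith
      have : 0 ≤ c * (u / 8) * (3 * u ^ 2 / 16) * (1 - 3 * u ^ 2 / 8) := by positivity
      linarith
    refine this.trans ?_
    gcongr
  have up2 : δ ≤ u := by
    have : u * u ^ 2 ≤ u * (1 / 4) := mul_le_mul_of_nonneg_left hu2 hu0.le
    nlinarith
  have lo : (1 - u ^ 2) * (u / 8 - 15 * u ^ 3 / 128) ≤ δ := by
    have s1 : Real.sin δ ≤ δ := Real.sin_le h0.le
    have c1 : 1 - u ^ 2 ≤ Real.cos δ := by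
      have := Real.one_sub_sq_div_two_le_cos (x := δ)
      have : δ ^ 2 ≤ u ^ 2 := by gcongr
      linarith [sq_nonneg u]
    have g0 : 0 ≤ u / 8 - 15 * u ^ 3 / 128 := by
      have : u * u ^ 2 ≤ u * (1 / 4) := mul_le_mul_of_nonneg_left hu2 hu0.le
      nlinarith
    have k1 : Real.cos δ * (c * (u / 8 - 15 * u ^ 3 / 128)) ≤ Real.sin δ * c := by
      calc _ ≤ Real.cos δ * B := by gcongr; linarith
        _ = Real.sin δ * A := by linarith
        _ ≤ _ := by gcongr
    have k2 : Real.cos δ * (u / 8 - 15 * u ^ 3 / 128) ≤ Real.sin δ := by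
      have : c * (Real.cos δ * (u / 8 - 15 * u ^ 3 / 128)) ≤ c * Real.sin δ := by linarith
      exact le_of_mul_le_mul_left this hc
    calc _ ≤ Real.cos δ * (u / 8 - 15 * u ^ 3 / 128) := by gcongr
      _ ≤ _ := k2.trans s1
  have u2 : 0 < u ^ 2 := by positivity
  have u3 : u ^ 3 ≤ u ^ 2 / 2 := by
    have := mul_le_mul_of_nonneg_left hu1 u2.le
    linarith [show u ^ 3 = u ^ 2 * u by ring]
  have u3' : 0 < u ^ 3 := by positivity
  have u5 : 0 < u ^ 5 := by positivity
  rw [abs_le]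
  have ex1 : (1 - u ^ 2) * (u / 8 - 15 * u ^ 3 / 128) = u / 8 - 31 * u ^ 3 / 128 + 15 * u ^ 5 / 128 := by ring
  have ex2 : u / 8 * (1 + 3 * u ^ 2 / 8) = u / 8 + 3 * u ^ 3 / 64 := by ring
  rw [ex1] at lo
  rw [ex2] at up
  constructor <;> linarith

lemma zero_loc (x : ℝ) (hx : 0 < x) (h : J0 x = 0) : ∃ n : ℕ, 1 ≤ n ∧ ∃ δ, 0 < δ ∧ δ < Real.pi / 4 ∧
    x = Real.pi * n - Real.pi / 4 + δ := by
  have hpi := Real.pi_pos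
  set m := ⌊x / Real.pi⌋₊ with hm
  have m1 : (m : ℝ) * Real.pi ≤ x := by
    rw [← le_div_iff₀ hpi]; exact Nat.floor_le (by positivity)
  have m2 : x < (m + 1) * Real.pi := by
    rw [← div_lt_iff₀ hpi]; exact Nat.lt_floor_add_one _
  set δ := x - Real.pi * ((m + 1 : ℕ) : ℝ) + Real.pi / 4 with hδ
  have e : x = Real.pi * ((m + 1 : ℕ) : ℝ) - Real.pi / 4 + δ := by rw [hδ]; ring
  push_cast at hδ
  refine ⟨m + 1, by omega, δ, ?_, by linarith, e⟩
  by_contra hcon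
  push Not at hcon
  have := S_neg x δ hx (by linarith) hcon
  rw [e] at hx h
  have := (J0_zero_iff _ _ hx).1 h
  rw [← e] at this
  linarith

lemma beta_pos (n : ℕ) (hn : 1 ≤ n) : 2 * (n : ℝ) ≤ Real.pi * n - Real.pi / 4 := by
  have : (1:ℝ) ≤ n := by exact_mod_cast hn
  nlinarith [Real.pi_gt_three]

lemma zero_ex (n : ℕ) (hn : 1 ≤ n) : ∃ δ, 0 ≤ δ ∧ δ ≤ Real.pi / 4 ∧ J0 (Real.pi * n - Real.pi / 4 + δ) = 0 := by
  have hpi := Real.pi_pos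
  have hb := beta_pos n hn
  have hn1 : (1:ℝ) ≤ n := by exact_mod_cast hn
  have hc : Continuous fun δ => (-1:ℝ) ^ n * ((Real.pi / 2) * J0 (Real.pi * n - Real.pi / 4 + δ)) := by
    have := J0_cont
    fun_prop
  have e : ∀ δ, 0 ≤ δ → (-1:ℝ) ^ n * ((Real.pi / 2) * J0 (Real.pi * n - Real.pi / 4 + δ)) = S (Real.pi * n - Real.pi / 4 + δ) δ := by
    intro δ h
    rw [repS n δ (by linarith), ← mul_assoc, ← mul_pow]; norm_num
  have := intermediate_value_Icc (show (0:ℝ) ≤ Real.pi / 4 by positivity) hc.continuousOn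
  have hmem : (0:ℝ) ∈ Icc ((-1:ℝ) ^ n * ((Real.pi / 2) * J0 (Real.pi * n - Real.pi / 4 + 0))) ((-1:ℝ) ^ n * ((Real.pi / 2) * J0 (Real.pi * n - Real.pi / 4 + Real.pi / 4))) := by
    rw [e 0 le_rfl, e _ (by positivity)]
    exact ⟨(S_neg _ 0 (by linarith) (by linarith) le_rfl).le, (S_pos _ (by linarith)).le⟩
  obtain ⟨δ, hδ, h⟩ := this hmem
  refine ⟨δ, hδ.1, hδ.2, ?_⟩
  simp only at h
  rw [e δ hδ.1] at h
  exact (J0_zero_iff n δ (by linarith [hδ.1])).2 h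

lemma zero_uniq (n : ℕ) (hn : 1 ≤ n) (δ ε : ℝ) (h0 : 0 < δ) (h1 : δ < ε) (h2 : ε < Real.pi / 4)
    (hz : J0 (Real.pi * n - Real.pi / 4 + δ) = 0) : J0 (Real.pi * n - Real.pi / 4 + ε) ≠ 0 := by
  have hb := beta_pos n hn
  have hn1 : (1:ℝ) ≤ n := by exact_mod_cast hn
  intro hz2
  rw [J0_zero_iff _ _ (by linarith)] at hz hz2
  have := S_strict _ (Real.pi * n - Real.pi / 4 + ε) δ ε (by linarith) (by linarith) h0 h1 h2 hz
  linarith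

end BZ


/-- Asymptotics of the zeros of `J₀`: if `(z_n)_{n ≥ 1}` is the strictly increasing
enumeration of the positive zeros of `J₀`, then for every `κ > 0` there is `C > 0` such that
`|z_n − π(n − 1/4) − 1/(8π(n − 1/4))| ≤ C n^{−(2−κ)}` for every `n ≥ 1`. -/
theorem J0_zeros_asymptotics
    (z : ℕ → ℝ)
    (hzpos : ∀ n, 1 ≤ n → 0 < z n)
    (hzmono : ∀ m n, 1 ≤ m → m < n → z m < z n)
    (hzzero : ∀ n, 1 ≤ n → J0 (z n) = 0)
    (hzall : ∀ x : ℝ, 0 < x → J0 x = 0 → ∃ n, 1 ≤ n ∧ z n = x) :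
    ∀ κ : ℝ, 0 < κ → ∃ C : ℝ, 0 < C ∧ ∀ n : ℕ, 1 ≤ n →
      |z n - Real.pi * ((n : ℝ) - 1 / 4) - 1 / (8 * Real.pi * ((n : ℝ) - 1 / 4))| ≤
        C * (n : ℝ) ^ (-(2 - κ)) := by
  have hpi := Real.pi_pos
  have loc : ∀ n : ℕ, ∃ k : ℕ, 1 ≤ n → (1 ≤ k ∧ ∃ δ, 0 < δ ∧ δ < Real.pi / 4 ∧
    z n = Real.pi * k - Real.pi / 4 + δ) := by
    intro n
    by_cases hn : 1 ≤ n
    · obtain ⟨k, h1, h2⟩ := BZ.zero_loc (z n) (hzpos n hn) (hzzero n hn)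
      exact ⟨k, fun _ => ⟨h1, h2⟩⟩
    · exact ⟨0, fun h => absurd h hn⟩
  choose k hk using loc
  have kmono : ∀ m n, 1 ≤ m → m < n → k m < k n := by
    intro m n hm hmn
    have hn : 1 ≤ n := by omega
    obtain ⟨a1, δ, d0, d1, de⟩ := hk m hm
    obtain ⟨b1, ε, e0, e1, ee⟩ := hk n hn
    have hz := hzmono m n hm hmn
    by_contra hcon
    push Not at hcon
    rcases hcon.lt_or_eq with h | h
    · have : (k n : ℝ) + 1 ≤ k m := by exact_mod_cast h
      nlinarith
    · rw [h] at ee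
      have z1 := hzzero m hm
      have z2 := hzzero n hn
      rw [de] at z1
      rw [ee] at z2
      exact BZ.zero_uniq (k m) a1 δ ε d0 (by linarith) e1 z1 z2
  have ksurj : ∀ n, 1 ≤ n → ∃ j, 1 ≤ j ∧ k j = n := by
    intro n hn
    obtain ⟨ε, e0, e1, ez⟩ := BZ.zero_ex n hn
    have hb := BZ.beta_pos n hn
    have hn1 : (1:ℝ) ≤ n := by exact_mod_cast hn
    obtain ⟨j, hj, e⟩ := hzall _ (by linarith) ez
    refine ⟨j, hj, ?_⟩
    obtain ⟨a1, δ, d0, d1, de⟩ := hk j hj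
    rw [e] at de
    by_contra hne
    rcases Nat.lt_or_gt_of_ne hne with h | h
    · have : (k j : ℝ) + 1 ≤ n := by exact_mod_cast h
      nlinarith
    · have : (n : ℝ) + 1 ≤ k j := by exact_mod_cast h
      nlinarith
  have kge : ∀ n, 1 ≤ n → n ≤ k n := by
    intro n hn
    induction n, hn using Nat.le_induction with
    | base => exact (hk 1 le_rfl).1
    | succ n hn ih =>
      have := kmono n (n+1) hn (by omega)
      omega
  have kid : ∀ n, 1 ≤ n → k n = n := by
    intro n
    induction n using Nat.strong_induction_on with
    | _ n ih =>
      intro hn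
      obtain ⟨j, hj, e⟩ := ksurj n hn
      have := kge j hj
      rcases Nat.lt_or_ge j n with h | h
      · have := ih j h hj; omega
      · have : j = n := by omega
        rw [← this]; omega
  intro κ hκ
  refine ⟨1, one_pos, fun n hn => ?_⟩
  obtain ⟨_, δ, d0, d1, de⟩ := hk n hn
  rw [kid n hn] at de
  have hb := BZ.beta_pos n hn
  have hn1 : (1:ℝ) ≤ n := by exact_mod_cast hn
  have hz := hzzero n hn
  rw [de, BZ.J0_zero_iff _ _ (by linarith)] at hz
  have ha := BZ.asym _ δ (by linarith) d0 d1 hz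
  have eb : Real.pi * ((n : ℝ) - 1 / 4) = Real.pi * n - Real.pi / 4 := by ring
  rw [mul_assoc 8, eb, de]
  set β := Real.pi * n - Real.pi / 4
  have hβ0 : 0 < β := by linarith
  have hx0 : 0 < β + δ := by linarith
  have hd1 : δ ≤ 1 := by linarith [Real.pi_lt_four]
  have t2 : |1 / (8 * (β + δ)) - 1 / (8 * β)| ≤ 1 / β ^ 2 := by
    have : 1 / (8 * (β + δ)) - 1 / (8 * β) = - (δ / (8 * (β + δ) * β)) := by
      field_simp; ring
    rw [this, abs_neg, abs_of_pos (by positivity)]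
    apply div_le_div₀ (by norm_num) hd1 (by positivity)
    nlinarith
  have t1 : 1 / (β + δ) ^ 2 ≤ 1 / β ^ 2 := by
    apply one_div_le_one_div_of_le (by positivity)
    nlinarith
  have t3 : 1 / β ^ 2 ≤ 1 / (4 * (n:ℝ) ^ 2) := by
    apply one_div_le_one_div_of_le (by positivity)
    nlinarith
  have t4 : (n : ℝ) ^ (-2 : ℝ) ≤ (n : ℝ) ^ (-(2 - κ)) :=
    Real.rpow_le_rpow_of_exponent_le hn1 (by linarith)
  have t5 : (n : ℝ) ^ (-2 : ℝ) = 1 / (n : ℝ) ^ 2 := by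
    rw [Real.rpow_neg (by positivity)]; norm_num
  have t6 : 1 / (4 * (n:ℝ) ^ 2) = (1 / (n:ℝ) ^ 2) / 4 := by field_simp
  have t7 : 0 < 1 / (n:ℝ) ^ 2 := by positivity
  have e : β + δ - β - 1 / (8 * β) = (δ - 1 / (8 * (β + δ))) + (1 / (8 * (β + δ)) - 1 / (8 * β)) := by ring
  rw [e]
  refine (abs_add_le _ _).trans ?_
  rw [one_mul]
  linarith
end
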